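/- arXiv:1804.02548 — 2 statements merged into one kernel-verified Lean document; each statement's English description precedes it below -/
import Mathlib

section
/- For all integers p, q with 1 ≤ p < q and every function f ∈ 𝔉 with f ≺ 𝔦 (where 𝔦(n) = n), the Baumslag–Solitar group BS(p,q) = ⟨a, t | t a^p t⁻¹ = a^q⟩ does not belong to the class ℬ_f. -/
namespace CAG

/-- The convolution `w₁ ⊗ w₂` of two words, over the padded alphabet
`(Σ ∪ {⋄})²`, modelled as `Option α × Option α` where `none` is the padding symbol `⋄`. -/
def conv {α : Type*} : List α → List α → List (Option α × Option α)
  | [], [] => []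
  | a :: as, [] => (some a, none) :: conv as []
  | [], b :: bs => (none, some b) :: conv [] bs
  | a :: as, b :: bs => (some a, some b) :: conv as bs

/-- A binary relation on words is regular if the language of convolutions of its pairs
is a regular language. -/
def IsRegularRel {α : Type*} (R : Set (List α × List α)) : Prop :=
  Language.IsRegular {w | ∃ p ∈ R, w = conv p.1 p.2}

variable {G : Type*} [Group G]

/-- The alphabet `S = A ∪ A⁻¹` associated to a generating set `A ⊆ G`. -/
def Alph (A : Set G) : Type _ := {x : G // x ∈ A ∪ A⁻¹}

/-- The canonical evaluation map `π : S* → G`. -/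
def eval (A : Set G) (w : List (Alph A)) : G := (w.map Subtype.val).prod

/-- The word length `d_A(g)` of `g` with respect to the generating set `A`. -/
noncomputable def wordLength (A : Set G) (g : G) : ℕ :=
  sInf {n | ∃ w : List (Alph A), eval A w = g ∧ w.length = n}

/-- The distance `d_A(g₁, g₂)` in the Cayley graph of `G` with respect to `A`. -/
noncomputable def cayleyDist (A : Set G) (g₁ g₂ : G) : ℕ := wordLength A (g₁⁻¹ * g₂)

/-- `ψ : L → G` is a Cayley automatic representation of `G` (w.r.t. the
generating set `A`): `L ⊆ S*` is regular, `ψ` is a bijection from `L` onto `G`, and for every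
`a ∈ A` the relation `R_a = {(ψ⁻¹(g), ψ⁻¹(g·a)) : g ∈ G}` is regular. -/
def IsCayleyAutomaticRep (A : Set G) (L : Language (Alph A)) (ψ : List (Alph A) → G) : Prop :=
  Language.IsRegular L ∧ Set.BijOn ψ L Set.univ ∧
    ∀ a ∈ A, IsRegularRel {p : List (Alph A) × List (Alph A) |
      p.1 ∈ L ∧ p.2 ∈ L ∧ ψ p.2 = ψ p.1 * a}

/-- `G` is Cayley automatic with respect to the generating set `A`. -/
def IsCayleyAutomatic (A : Set G) : Prop :=
  ∃ (L : Language (Alph A)) (ψ : List (Alph A) → G), IsCayleyAutomaticRep A L ψ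

/-- `G` is automatic (in the sense of Thurston) with respect to the generating set `A`:
there is a regular language `L ⊆ S*` on which the canonical evaluation map `π` is a bijection
onto `G` and all the relations `R_a`, `a ∈ A`, are regular. -/
def IsAutomatic (A : Set G) : Prop :=
  ∃ L : Language (Alph A), IsCayleyAutomaticRep A L (eval A)

/-- The family `𝔉` of non-decreasing, non-negative real valued functions defined on a
final segment `[Q, ∞)` of `ℕ` (values below `Q` are irrelevant junk values). -/
structure FFun where
  Q : ℕ
  toFun : ℕ → ℝ
  nonneg : ∀ n, Q ≤ n → 0 ≤ toFun n
  mono : ∀ m n, Q ≤ m → m ≤ n → toFun m ≤ toFun n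

/-- `h ⪯ f` : there are positive integers `K, M, N`, with `[N,∞)` contained in the domains of
`h` and `f`, such that `h(n) ≤ K·f(M·n)` for all `n ≥ N`. -/
def FFun.Preceq (h f : FFun) : Prop :=
  ∃ K M N : ℕ, 0 < K ∧ 0 < M ∧ 0 < N ∧ h.Q ≤ N ∧ f.Q ≤ N ∧
    ∀ n, N ≤ n → h.toFun n ≤ K * f.toFun (M * n)

/-- `h ≍ f` iff `h ⪯ f` and `f ⪯ h`. -/
def FFun.Equiv (h f : FFun) : Prop := h.Preceq f ∧ f.Preceq h

/-- `h ≺ f` iff `h ⪯ f` and not `h ≍ f`. -/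
def FFun.Prec (h f : FFun) : Prop := h.Preceq f ∧ ¬ h.Equiv f

/-- `G ∈ ℬ_f` with respect to the generating set `A`: there is a Cayley automatic
representation `ψ : L → G` such that the function
`h(n) = max{d_A(π(w), ψ(w)) : w ∈ L, |w| ≤ n}` satisfies `h ⪯ f`
(stated equivalently: for some positive `K, M, N` with `N ≥ Q_f`, every `w ∈ L` with `|w| ≤ n`
and `n ≥ N` satisfies `d_A(π(w), ψ(w)) ≤ K·f(M·n)`). -/
def InB (A : Set G) (f : FFun) : Prop :=
  ∃ (L : Language (Alph A)) (ψ : List (Alph A) → G),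
    IsCayleyAutomaticRep A L ψ ∧
    ∃ K M N : ℕ, 0 < K ∧ 0 < M ∧ 0 < N ∧ f.Q ≤ N ∧
      ∀ n, N ≤ n → ∀ w ∈ L, w.length ≤ n →
        (cayleyDist A (eval A w) (ψ w) : ℝ) ≤ K * f.toFun (M * n)

/-- The identity function `𝔦(n) = n` as an element of `𝔉`. -/
def identF : FFun where
  Q := 1
  toFun n := n
  nonneg n _ := by positivity
  mono m n _ h := by simpa using (Nat.cast_le (α := ℝ)).mpr h

/-- The exponential function `𝔢(n) = exp n` as an element of `𝔉`. -/
noncomputable def expF : FFun where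
  Q := 1
  toFun n := Real.exp n
  nonneg n _ := (Real.exp_pos n).le
  mono m n _ h := Real.exp_le_exp.mpr (by exact_mod_cast h)

end CAG
namespace CAG

/-- The defining relation of the Baumslag–Solitar group `BS(p,q) = ⟨a,t | t aᵖ t⁻¹ = a^q⟩`,
with `a` the generator `0` and `t` the generator `1` of the free group on two generators. -/
def BSRels (p q : ℕ) : Set (FreeGroup (Fin 2)) :=
  {FreeGroup.of 1 * FreeGroup.of 0 ^ p * (FreeGroup.of 1)⁻¹ * (FreeGroup.of 0 ^ q)⁻¹}

/-- The Baumslag–Solitar group `BS(p,q) = ⟨a,t | t aᵖ t⁻¹ = a^q⟩`. -/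
abbrev BS (p q : ℕ) := PresentedGroup (BSRels p q)

/-- The generator `a` of `BS(p,q)`. -/
def BS.a (p q : ℕ) : BS p q := PresentedGroup.of 0

/-- The generator `t` of `BS(p,q)`. -/
def BS.t (p q : ℕ) : BS p q := PresentedGroup.of 1

/-- The alphabet of blocks `{t, at, …, a^{q-1}t, t⁻¹, at⁻¹, …, a^{p-1}t⁻¹}`:
`.inl i` stands for `aⁱt` (`0 ≤ i < q`) and `.inr j` stands for `aʲt⁻¹` (`0 ≤ j < p`). -/
abbrev BSBlock (p q : ℕ) := Fin q ⊕ Fin p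

/-- The word in the letters `a, t` (elements of `Fin 2 × Bool`, the letter `(x, b)` standing
for `x` if `b = true` and `x⁻¹` if `b = false`) spelled by a single block. -/
def BSBlock.letters {p q : ℕ} : BSBlock p q → List (Fin 2 × Bool)
  | .inl i => List.replicate i.val ((0 : Fin 2), true) ++ [((1 : Fin 2), true)]
  | .inr j => List.replicate j.val ((0 : Fin 2), true) ++ [((1 : Fin 2), false)]

/-- The word in the letters `a, t` spelled by a sequence of blocks. -/
def BSBlockWord {p q : ℕ} (bs : List (BSBlock p q)) : List (Fin 2 × Bool) :=
  (bs.map BSBlock.letters).flatten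

/-- A sequence of blocks is freely reduced if the word in `a, t` it spells is freely
reduced, i.e. it contains no subword `x x⁻¹` or `x⁻¹ x`. -/
def BSFreelyReduced {p q : ℕ} (bs : List (BSBlock p q)) : Prop :=
  FreeGroup.reduce (BSBlockWord bs) = BSBlockWord bs

/-- The element of `BS(p,q)` represented by a single block. -/
def BSBlock.elem {p q : ℕ} : BSBlock p q → BS p q
  | .inl i => BS.a p q ^ i.val * BS.t p q
  | .inr j => BS.a p q ^ j.val * (BS.t p q)⁻¹

end CAG

namespace CAG

section Words
variable {α : Type*}

lemma conv_length (u v : List α) : (conv u v).length = max u.length v.length := by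
  induction u generalizing v with
  | nil =>
    induction v with
    | nil => simp [conv]
    | cons b bs ih => simp [conv, ih]
  | cons a as ih =>
    cases v with
    | nil => simp [conv, ih]
    | cons b bs => simp [conv, ih]

lemma conv_fst (u v : List α) : (conv u v).filterMap Prod.fst = u := by
  induction u generalizing v with
  | nil =>
    induction v with
    | nil => simp [conv]
    | cons b bs ih => simp [conv, ih]
  | cons a as ih =>
    cases v with
    | nil => simp [conv, ih]
    | cons b bs => simp [conv, ih]

lemma conv_snd (u v : List α) : (conv u v).filterMap Prod.snd = v := by
  induction u generalizing v with
  | nil =>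
    induction v with
    | nil => simp [conv]
    | cons b bs ih => simp [conv, ih]
  | cons a as ih =>
    cases v with
    | nil => simp [conv, ih]
    | cons b bs => simp [conv, ih]

lemma conv_take (u v : List α) (k : ℕ) :
    (conv u v).take k = conv (u.take k) (v.take k) := by
  induction k generalizing u v with
  | zero => simp [conv]
  | succ k ih =>
    have h0 : ∀ k, ([] : List α).take k = [] := fun k => by simp
    cases u with
    | nil =>
      cases v with
      | nil => simp [conv]
      | cons b bs => simp only [conv, List.take_succ_cons, List.take_nil, ih]
    | cons a as =>
      cases v with
      | nil => simp only [conv, List.take_succ_cons, List.take_nil, ih]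
      | cons b bs => simp [conv, ih]

/-- The part of a convolution past the end of the first word has only padding there. -/
lemma conv_drop_fst (u v : List α) : ((conv u v).drop u.length).filterMap Prod.fst = [] := by
  induction u generalizing v with
  | nil => simpa using conv_fst [] v
  | cons a as ih =>
    cases v with
    | nil => simpa [conv] using ih []
    | cons b bs => simpa [conv] using ih bs

lemma conv_drop_snd (u v : List α) : ((conv u v).drop v.length).filterMap Prod.snd = [] := by
  induction u generalizing v with
  | nil =>
    induction v with
    | nil => simp [conv]
    | cons b bs ih => simpa [conv] using ih
  | cons a as ih =>
    cases v with
    | nil => simpa using conv_snd (a :: as) []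
    | cons b bs => simpa [conv] using ih bs

lemma exists_short {σ : Type} [Fintype σ] (M : DFA α σ) (s t : σ) (x : List α)
    (hx : M.evalFrom s x = t) :
    ∃ z : List α, z.length ≤ Fintype.card σ ∧ M.evalFrom s z = t := by
  induction hn : x.length using Nat.strong_induction_on generalizing x with
  | _ n ih =>
    by_cases hle : x.length ≤ Fintype.card σ
    · exact ⟨x, hle, hx⟩
    · obtain ⟨q, a, b, c, rfl, -, hb, ha, hbq, hc⟩ := M.evalFrom_split (by omega) hx
      refine ih (a ++ c).length ?_ (a ++ c) ?_ rfl
      · have := List.length_pos_of_ne_nil hb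
        simp at hn ⊢; omega
      · rw [DFA.evalFrom_of_append, ha, hc]

/-- Any regular relation allows to complete prefixes by bounded words. -/
lemma exists_completion {R : Set (List α × List α)} (hR : IsRegularRel R) :
    ∃ C : ℕ, ∀ p ∈ R, ∀ k : ℕ, ∃ z₁ z₂ : List α, z₁.length ≤ C ∧ z₂.length ≤ C ∧
      (p.1.take k ++ z₁, p.2.take k ++ z₂) ∈ R := by
  obtain ⟨σ, _, M, hM⟩ := hR
  refine ⟨Fintype.card σ, fun p hp k => ?_⟩
  have hacc : conv p.1 p.2 ∈ M.accepts := by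
    rw [hM]; exact ⟨p, hp, rfl⟩
  rw [← List.take_append_drop k (conv p.1 p.2), DFA.mem_accepts, DFA.eval,
    DFA.evalFrom_of_append] at hacc
  obtain ⟨z, hz, hze⟩ := exists_short M _ _ ((conv p.1 p.2).drop k) rfl
  rw [← hze, ← DFA.evalFrom_of_append] at hacc
  have h2 : (conv p.1 p.2).take k ++ z ∈ M.accepts := hacc
  rw [hM] at h2
  obtain ⟨p', hp', he⟩ := h2
  have e1 := congrArg (List.filterMap Prod.fst) he
  have e2 := congrArg (List.filterMap Prod.snd) he
  rw [List.filterMap_append, conv_take, conv_fst, conv_fst] at e1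
  rw [List.filterMap_append, conv_take, conv_snd, conv_snd] at e2
  refine ⟨z.filterMap Prod.fst, z.filterMap Prod.snd,
    (List.length_filterMap_le _ _).trans hz, (List.length_filterMap_le _ _).trans hz, ?_⟩
  rw [e1, e2]; exact hp'

lemma length_bound_right {R : Set (List α × List α)} (hR : IsRegularRel R)
    (hinj : ∀ u v v', (u, v) ∈ R → (u, v') ∈ R → v = v') :
    ∃ C : ℕ, ∀ p ∈ R, p.2.length ≤ p.1.length + C := by
  obtain ⟨σ, _, M, hM⟩ := hR
  refine ⟨Fintype.card σ, fun p hp => ?_⟩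
  by_contra! hlt
  obtain ⟨u, v⟩ := p
  simp only at hlt
  have hacc : conv u v ∈ M.accepts := by
    rw [hM]; exact ⟨_, hp, rfl⟩
  rw [← List.take_append_drop u.length (conv u v), DFA.mem_accepts, DFA.eval,
    DFA.evalFrom_of_append] at hacc
  obtain ⟨q, a, b, c, hx, -, hb, ha, hbq, hc⟩ :=
    M.evalFrom_split (x := (conv u v).drop u.length) (s := M.evalFrom M.start
      ((conv u v).take u.length)) (by rw [List.length_drop, conv_length]; omega) rfl
  rw [← hc, ← ha, ← DFA.evalFrom_of_append, ← DFA.evalFrom_of_append] at hacc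
  have h2 : (conv u v).take u.length ++ (a ++ c) ∈ M.accepts := hacc
  rw [hM] at h2
  obtain ⟨⟨u', v'⟩, hp', he⟩ := h2
  have hd := conv_drop_fst u v
  rw [hx, List.filterMap_append, List.filterMap_append, List.append_eq_nil_iff,
    List.append_eq_nil_iff] at hd
  have e1 := congrArg (List.filterMap Prod.fst) he
  rw [List.filterMap_append, List.filterMap_append, conv_take, conv_fst, conv_fst,
    hd.1.1, hd.2] at e1
  simp at e1
  subst e1
  have hv := hinj _ _ _ hp hp'
  subst hv
  have hl := congrArg List.length he
  have hl2 := congrArg List.length hx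
  have := List.length_pos_of_ne_nil hb
  simp [conv_length] at hl hl2
  omega

lemma length_bound_left {R : Set (List α × List α)} (hR : IsRegularRel R)
    (hinj : ∀ u u' v, (u, v) ∈ R → (u', v) ∈ R → u = u') :
    ∃ C : ℕ, ∀ p ∈ R, p.1.length ≤ p.2.length + C := by
  obtain ⟨σ, _, M, hM⟩ := hR
  refine ⟨Fintype.card σ, fun p hp => ?_⟩
  by_contra! hlt
  obtain ⟨v, u⟩ := p
  simp only at hlt
  have hacc : conv v u ∈ M.accepts := by
    rw [hM]; exact ⟨_, hp, rfl⟩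
  rw [← List.take_append_drop u.length (conv v u), DFA.mem_accepts, DFA.eval,
    DFA.evalFrom_of_append] at hacc
  obtain ⟨q, a, b, c, hx, -, hb, ha, hbq, hc⟩ :=
    M.evalFrom_split (x := (conv v u).drop u.length) (s := M.evalFrom M.start
      ((conv v u).take u.length)) (by rw [List.length_drop, conv_length]; omega) rfl
  rw [← hc, ← ha, ← DFA.evalFrom_of_append, ← DFA.evalFrom_of_append] at hacc
  have h2 : (conv v u).take u.length ++ (a ++ c) ∈ M.accepts := hacc
  rw [hM] at h2
  obtain ⟨⟨v', u'⟩, hp', he⟩ := h2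
  have hd := conv_drop_snd v u
  rw [hx, List.filterMap_append, List.filterMap_append, List.append_eq_nil_iff,
    List.append_eq_nil_iff] at hd
  have e1 := congrArg (List.filterMap Prod.snd) he
  rw [List.filterMap_append, List.filterMap_append, conv_take, conv_snd, conv_snd,
    hd.1.1, hd.2] at e1
  simp at e1
  subst e1
  have hv := hinj _ _ _ hp hp'
  subst hv
  have hl := congrArg List.length he
  have hl2 := congrArg List.length hx
  have := List.length_pos_of_ne_nil hb
  simp [conv_length] at hl hl2
  omega

end Words

section Fill
variable {G : Type*} [Group G]

@[simp] lemma eval_nil (A : Set G) : eval A [] = 1 := rfl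

@[simp] lemma eval_cons (A : Set G) (s : Alph A) (w : List (Alph A)) :
    eval A (s :: w) = s.val * eval A w := List.prod_cons

@[simp] lemma eval_append (A : Set G) (u v : List (Alph A)) :
    eval A (u ++ v) = eval A u * eval A v := by
  induction u with
  | nil => simp
  | cons s u ih => simp [ih, mul_assoc]

/-- The letter with a given value. -/
def mkL (A : Set G) (s : G) (hs : s ∈ A ∪ A⁻¹) : Alph A := ⟨s, hs⟩

@[simp] lemma eval_mkL (A : Set G) (s : G) (hs : s ∈ A ∪ A⁻¹) (w : List (Alph A)) :
    eval A (mkL A s hs :: w) = s * eval A w := eval_cons A _ w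

/-- The integral of the edge function `e` along the path labelled by `w` starting at `g`. -/
def Phi (A : Set G) (e : G → G → ℝ) : G → List (Alph A) → ℝ
  | _, [] => 0
  | g, s :: w => e g s.val + Phi A e (g * s.val) w

@[simp] lemma Phi_nil (A : Set G) (e : G → G → ℝ) (g : G) : Phi A e g [] = 0 := rfl

@[simp] lemma Phi_cons (A : Set G) (e : G → G → ℝ) (g : G) (s : Alph A) (w : List (Alph A)) :
    Phi A e g (s :: w) = e g s.val + Phi A e (g * s.val) w := rfl

@[simp] lemma Phi_mkL (A : Set G) (e : G → G → ℝ) (g : G) (s : G) (hs : s ∈ A ∪ A⁻¹)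
    (w : List (Alph A)) :
    Phi A e g (mkL A s hs :: w) = e g s + Phi A e (g * s) w := rfl

lemma Phi_append (A : Set G) (e : G → G → ℝ) (g : G) (u v : List (Alph A)) :
    Phi A e g (u ++ v) = Phi A e g u + Phi A e (g * eval A u) v := by
  induction u generalizing g with
  | nil => simp
  | cons s u ih => simp [ih, mul_assoc, add_assoc]

/-- `A` generates `G` as a monoid together with its inverses. -/
def Gens (A : Set G) : Prop := ∀ g : G, ∃ w : List (Alph A), eval A w = g

lemma wordLength_le (A : Set G) (w : List (Alph A)) : wordLength A (eval A w) ≤ w.length :=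
  Nat.sInf_le ⟨w, rfl, rfl⟩

lemma Gens.exists_geo {A : Set G} (hA : Gens A) (g : G) :
    ∃ w : List (Alph A), eval A w = g ∧ w.length = wordLength A g := by
  obtain ⟨w, hw⟩ := hA g
  exact Nat.sInf_mem (s := {n | ∃ w : List (Alph A), eval A w = g ∧ w.length = n})
    ⟨w.length, w, hw, rfl⟩

lemma Gens.wordLength_mul {A : Set G} (hA : Gens A) (g h : G) :
    wordLength A (g * h) ≤ wordLength A g + wordLength A h := by
  obtain ⟨u, hu, hu'⟩ := hA.exists_geo g
  obtain ⟨v, hv, hv'⟩ := hA.exists_geo h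
  have := wordLength_le A (u ++ v)
  rw [eval_append, hu, hv, List.length_append, hu', hv'] at this
  exact this

lemma exists_inv_word (A : Set G) (w : List (Alph A)) :
    ∃ v : List (Alph A), eval A v = (eval A w)⁻¹ ∧ v.length = w.length := by
  induction w with
  | nil => exact ⟨[], by simp, rfl⟩
  | cons s w ih =>
    obtain ⟨v, hv, hl⟩ := ih
    have hs : s.val⁻¹ ∈ A ∪ A⁻¹ := by
      rcases s.2 with h | h
      · right; simpa using h
      · left; simpa using h
    exact ⟨v ++ [mkL A s.val⁻¹ hs], by simp [hv]; rfl, by simp [hl]⟩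

lemma Gens.wordLength_inv_le {A : Set G} (hA : Gens A) (g : G) :
    wordLength A g⁻¹ ≤ wordLength A g := by
  obtain ⟨u, hu, hu'⟩ := hA.exists_geo g
  obtain ⟨v, hv, hl⟩ := exists_inv_word A u
  have := wordLength_le A v
  rw [hv, hu] at this
  omega

lemma wordLength_gen_le {A : Set G} {s : G} (hs : s ∈ A) : wordLength A s ≤ 1 := by
  have := wordLength_le A [mkL A s (Set.mem_union_left _ hs)]
  rw [eval_mkL] at this
  simpa using this

lemma cayley_length_bound {A : Set G} {L : Language (Alph A)} {ψ : List (Alph A) → G}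
    (hψ : IsCayleyAutomaticRep A L ψ) {s : G} (hs : s ∈ A) :
    ∃ C : ℕ, (∀ w ∈ L, ∀ w' ∈ L, ψ w' = ψ w * s →
      w'.length ≤ w.length + C ∧ w.length ≤ w'.length + C ∧
      ∀ k : ℕ, ∃ z₁ z₂ : List (Alph A), z₁.length ≤ C ∧ z₂.length ≤ C ∧
        w.take k ++ z₁ ∈ L ∧ w'.take k ++ z₂ ∈ L ∧
        ψ (w'.take k ++ z₂) = ψ (w.take k ++ z₁) * s) := by
  obtain ⟨-, hbij, hreg⟩ := hψ
  have hR := hreg s hs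
  obtain ⟨C₁, h₁⟩ := exists_completion hR
  obtain ⟨C₂, h₂⟩ := length_bound_right hR (by
    rintro u v v' ⟨-, hv, he⟩ ⟨-, hv', he'⟩
    exact hbij.injOn hv hv' (by simp only at he he'; rw [he, he']))
  obtain ⟨C₃, h₃⟩ := length_bound_left hR (by
    rintro u u' v ⟨hu, -, he⟩ ⟨hu', -, he'⟩
    refine hbij.injOn hu hu' ?_
    simp only at he he'
    exact mul_right_cancel (he.symm.trans he'))
  refine ⟨C₁ + C₂ + C₃, fun w hw w' hw' he => ⟨?_, ?_, fun k => ?_⟩⟩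
  · have := h₂ (w, w') ⟨hw, hw', he⟩
    simp only at this; omega
  · have := h₃ (w, w') ⟨hw, hw', he⟩
    simp only at this; omega
  · obtain ⟨z₁, z₂, hz₁, hz₂, ha, hb, hc⟩ := h₁ (w, w') ⟨hw, hw', he⟩ k
    exact ⟨z₁, z₂, by omega, by omega, ha, hb, hc⟩

/-- Distance between prefixes of neighbouring representatives. -/
lemma prefix_dist {A : Set G} (hA : Gens A) {L : Language (Alph A)} {ψ : List (Alph A) → G}
    {s : G} (hs : s ∈ A) {n C h : ℕ}
    (hn : ∀ w ∈ L, w.length ≤ n → cayleyDist A (eval A w) (ψ w) ≤ h)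
    (u u' z z' : List (Alph A)) (hz : z.length ≤ C) (hz' : z'.length ≤ C)
    (hu : u.length + C ≤ n) (hu' : u'.length + C ≤ n)
    (hL : u ++ z ∈ L) (hL' : u' ++ z' ∈ L) (he : ψ (u' ++ z') = ψ (u ++ z) * s) :
    wordLength A ((eval A u)⁻¹ * eval A u') ≤ 2 * C + 2 * h + 1 := by
  have d1 := hn _ hL (by simp; omega)
  have d2 := hn _ hL' (by simp; omega)
  unfold cayleyDist at d1 d2
  rw [he] at d2
  have d3 := hA.wordLength_inv_le ((eval A (u' ++ z'))⁻¹ * (ψ (u ++ z) * s))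
  have d4 := wordLength_le A z
  have d5 := hA.wordLength_inv_le (eval A z')
  have d6 := wordLength_le A z'
  have d7 := wordLength_gen_le hs
  have key : (eval A u)⁻¹ * eval A u' = eval A z * ((eval A (u ++ z))⁻¹ * ψ (u ++ z)) * s *
      ((eval A (u' ++ z'))⁻¹ * (ψ (u ++ z) * s))⁻¹ * (eval A z')⁻¹ := by
    simp only [eval_append]; group
  rw [key]
  have e1 := hA.wordLength_mul (eval A z * ((eval A (u ++ z))⁻¹ * ψ (u ++ z)) * s *
      ((eval A (u' ++ z'))⁻¹ * (ψ (u ++ z) * s))⁻¹) ((eval A z')⁻¹)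
  have e2 := hA.wordLength_mul (eval A z * ((eval A (u ++ z))⁻¹ * ψ (u ++ z)) * s)
      (((eval A (u' ++ z'))⁻¹ * (ψ (u ++ z) * s))⁻¹)
  have e3 := hA.wordLength_mul (eval A z * ((eval A (u ++ z))⁻¹ * ψ (u ++ z))) s
  have e4 := hA.wordLength_mul (eval A z) ((eval A (u ++ z))⁻¹ * ψ (u ++ z))
  omega

/-- Filling the strip between two fellow travelling words. -/
lemma strip {A : Set G} (e : G → G → ℝ) (B : ℕ → ℝ) (hB : Monotone B)
    (hloop : ∀ g (u v : List (Alph A)), eval A u = eval A v →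
      |Phi A e g u - Phi A e g v| ≤ B u.length + B v.length)
    (geo : G → List (Alph A)) (hgeo : ∀ g, eval A (geo g) = g)
    (hgeol : ∀ g, (geo g).length = wordLength A g)
    (w w' : List (Alph A)) (m : ℕ)
    (hd : ∀ k, wordLength A ((eval A (w.take k))⁻¹ * eval A (w'.take k)) ≤ m) (k : ℕ) :
    |Phi A e 1 (w.take k) + Phi A e (eval A (w.take k))
      (geo ((eval A (w.take k))⁻¹ * eval A (w'.take k))) - Phi A e 1 (w'.take k)| ≤
      (k + 1) * (2 * B (m + 1)) := by
  induction k with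
  | zero =>
    have h := hloop 1 (geo 1) [] (by simp [hgeo])
    have hd0 := hd 0
    simp only [List.take_zero, eval_nil, inv_one, mul_one] at hd0 ⊢
    have h1 : B (geo 1).length ≤ B (m + 1) := hB (by rw [hgeol]; omega)
    have h2 : B ([] : List (Alph A)).length ≤ B (m + 1) := hB (by simp)
    simp only [Phi_nil] at h ⊢
    rw [zero_add]
    push_cast
    linarith
  | succ k ih =>
    have h1 := hd k
    have h2 := hd (k + 1)
    have ho : (w[k]?.toList).length ≤ 1 := by cases w[k]? <;> simp
    have ho' : (w'[k]?.toList).length ≤ 1 := by cases w'[k]? <;> simp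
    rw [List.take_add_one, List.take_add_one] at *
    generalize w[k]?.toList = o at *
    generalize w'[k]?.toList = o' at *
    generalize w.take k = u at *
    generalize w'.take k = u' at *
    have hl := hloop (eval A u) (o ++ geo ((eval A (u ++ o))⁻¹ * eval A (u' ++ o')))
      (geo ((eval A u)⁻¹ * eval A u') ++ o') (by
        simp only [eval_append, hgeo]; group)
    have b1 : B (o ++ geo ((eval A (u ++ o))⁻¹ * eval A (u' ++ o'))).length ≤ B (m + 1) :=
      hB (by rw [List.length_append, hgeol]; omega)
    have b2 : B (geo ((eval A u)⁻¹ * eval A u') ++ o').length ≤ B (m + 1) :=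
      hB (by rw [List.length_append, hgeol]; omega)
    rw [Phi_append, Phi_append, hgeo, mul_inv_cancel_left, ← eval_append] at hl
    rw [Phi_append, Phi_append, one_mul, one_mul]
    rw [abs_le] at *
    push_cast
    constructor <;> linarith [hl.1, hl.2, ih.1, ih.2]

/-- The filling inequality. -/
lemma filling {A : Set G} (hA : Gens A) (hfin : A.Finite) {L : Language (Alph A)}
    {ψ : List (Alph A) → G} (hψ : IsCayleyAutomaticRep A L ψ)
    (e : G → G → ℝ) (hinv : ∀ g, ∀ s ∈ A, e (g * s) s⁻¹ = - e g s)
    (B : ℕ → ℝ) (hB : Monotone B)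
    (hloop : ∀ g (u v : List (Alph A)), eval A u = eval A v →
      |Phi A e g u - Phi A e g v| ≤ B u.length + B v.length) :
    ∃ C c₀ : ℕ, ∀ (n h l : ℕ), c₀ + C * l + C ≤ n →
      (∀ w ∈ L, w.length ≤ n → cayleyDist A (eval A w) (ψ w) ≤ h) →
      ∀ u v : List (Alph A), eval A u = eval A v → u.length ≤ l → v.length ≤ l →
        |Phi A e 1 u - Phi A e 1 v| ≤ 2 * l * ((n + 2) * (2 * B (2 * C + 3 * h + 2))) := by
  -- uniform constant
  have hC : ∃ C : ℕ, ∀ s ∈ A, (∀ w ∈ L, ∀ w' ∈ L, ψ w' = ψ w * s →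
      w'.length ≤ w.length + C ∧ w.length ≤ w'.length + C ∧
      ∀ k : ℕ, ∃ z₁ z₂ : List (Alph A), z₁.length ≤ C ∧ z₂.length ≤ C ∧
        w.take k ++ z₁ ∈ L ∧ w'.take k ++ z₂ ∈ L ∧
        ψ (w'.take k ++ z₂) = ψ (w.take k ++ z₁) * s) := by
    have := fun s (hs : s ∈ A) => cayley_length_bound hψ hs
    choose! C hC using this
    refine ⟨∑ s ∈ hfin.toFinset, C s, fun s hs w hw w' hw' he => ?_⟩
    have hle : C s ≤ ∑ s ∈ hfin.toFinset, C s :=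
      Finset.single_le_sum (f := C) (fun _ _ => Nat.zero_le _) (by simpa using hs)
    obtain ⟨h1, h2, h3⟩ := hC s hs w hw w' hw' he
    refine ⟨by omega, by omega, fun k => ?_⟩
    obtain ⟨z₁, z₂, a, b, c⟩ := h3 k
    exact ⟨z₁, z₂, by omega, by omega, c⟩
  obtain ⟨C, hC⟩ := hC
  have hrep : ∀ g, ∃ w, w ∈ L ∧ ψ w = g := fun g => hψ.2.1.surjOn (Set.mem_univ g)
  choose rep hrepL hrepψ using hrep
  choose geo hgeo hgeol using hA.exists_geo
  refine ⟨C, (rep 1).length, fun n h l hnl hn => ?_⟩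
  set Δ : ℝ := (n + 2) * (2 * B (2 * C + 3 * h + 2)) with hΔ
  set Pot : G → ℝ := fun g => Phi A e 1 (rep g) + Phi A e (eval A (rep g))
    (geo ((eval A (rep g))⁻¹ * g)) with hPot
  -- the edge estimate
  have edge : ∀ g, ∀ s ∈ A, (rep g).length + C ≤ n → (rep (g * s)).length + C ≤ n →
      |Pot g + e g s - Pot (g * s)| ≤ Δ := by
    intro g s hs hl1 hl2
    obtain ⟨-, -, hc⟩ := hC s hs _ (hrepL g) _ (hrepL (g * s)) (by rw [hrepψ, hrepψ])
    have hd : ∀ k, wordLength A ((eval A ((rep g).take k))⁻¹ *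
        eval A ((rep (g * s)).take k)) ≤ 2 * C + 2 * h + 1 := by
      intro k
      obtain ⟨z₁, z₂, a, b, c, d, f⟩ := hc k
      refine prefix_dist hA hs hn _ _ z₁ z₂ a b ?_ ?_ c d f
      · rw [List.length_take]; omega
      · rw [List.length_take]; omega
    have hst := strip e B hB hloop geo hgeo hgeol _ _ _ hd n
    have hdn := hd n
    rw [List.take_of_length_le (by omega), List.take_of_length_le (by omega)] at hst hdn
    have k1 := hn _ (hrepL g) (by omega)
    have k2 := hn _ (hrepL (g * s)) (by omega)
    unfold cayleyDist at k1 k2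
    rw [hrepψ] at k1 k2
    simp only [hPot]
    generalize rep g = w at *
    generalize rep (g * s) = w' at *
    have hl := hloop (eval A w) (geo ((eval A w)⁻¹ * g) ++ [mkL A s (Set.mem_union_left _ hs)])
      (geo ((eval A w)⁻¹ * eval A w') ++ geo ((eval A w')⁻¹ * (g * s))) (by
        simp only [eval_append, eval_mkL, eval_nil, hgeo]; group)
    have b1 : B (geo ((eval A w)⁻¹ * g) ++ [mkL A s (Set.mem_union_left _ hs)]).length ≤
        B (2 * C + 3 * h + 2) :=
      hB (by rw [List.length_append, hgeol]; simp; omega)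
    have b2 : B (geo ((eval A w)⁻¹ * eval A w') ++ geo ((eval A w')⁻¹ * (g * s))).length ≤
        B (2 * C + 3 * h + 2) :=
      hB (by rw [List.length_append, hgeol, hgeol]; omega)
    have b3 : B (2 * C + 2 * h + 1 + 1) ≤ B (2 * C + 3 * h + 2) := hB (by omega)
    have b4 : ((n : ℝ) + 1) * (2 * B (2 * C + 2 * h + 1 + 1)) ≤
        (n + 1) * (2 * B (2 * C + 3 * h + 2)) := by
      gcongr
    rw [Phi_append, Phi_append, hgeo, hgeo, mul_inv_cancel_left, mul_inv_cancel_left] at hl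
    simp only [Phi_mkL, Phi_nil, add_zero] at hl
    rw [abs_le] at *
    rw [hΔ]
    constructor <;> linarith [hl.1, hl.2, hst.1, hst.2]
  -- lengths of representatives and the path estimate
  have path : ∀ u : List (Alph A), u.length ≤ l →
      (rep (eval A u)).length ≤ (rep 1).length + C * u.length ∧
      |Phi A e 1 u + Pot 1 - Pot (eval A u)| ≤ u.length * Δ := by
    intro u
    induction u using List.reverseRecOn with
    | nil => intro _; simp
    | append_singleton u s ih =>
      intro hul
      rw [List.length_append, List.length_singleton] at hul
      obtain ⟨ih1, ih2⟩ := ih (by omega)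
      have hb : C * u.length + C ≤ C * l := by
        calc C * u.length + C = C * (u.length + 1) := by ring
          _ ≤ C * l := Nat.mul_le_mul_left _ hul
      rw [Phi_append, eval_append, List.length_append, List.length_singleton]
      simp only [eval_cons, eval_nil, mul_one, Phi_cons, Phi_nil, add_zero, one_mul]
      generalize eval A u = g at *
      obtain ⟨s, hs⟩ := s
      simp only
      have key : (rep (g * s)).length ≤ (rep g).length + C ∧
          ((rep (g * s)).length ≤ (rep g).length + C → |Pot g + e g s - Pot (g * s)| ≤ Δ) := by
        rcases hs with hs | hs
        · obtain ⟨h1, -, -⟩ := hC s hs _ (hrepL g) _ (hrepL (g * s)) (by rw [hrepψ, hrepψ])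
          exact ⟨h1, fun _ => edge g s hs (by omega) (by omega)⟩
        · have hs' : s⁻¹ ∈ A := hs
          obtain ⟨-, h1, -⟩ := hC s⁻¹ hs' _ (hrepL (g * s)) _ (hrepL g) (by
            rw [hrepψ, hrepψ]; group)
          refine ⟨h1, fun _ => ?_⟩
          have := edge (g * s) s⁻¹ hs' (by omega) (by rw [mul_inv_cancel_right]; omega)
          have h2 := hinv (g * s) s⁻¹ hs'
          rw [mul_inv_cancel_right] at this
          rw [mul_inv_cancel_right, inv_inv] at h2
          rw [h2]
          rw [abs_le] at *
          constructor <;> linarith [this.1, this.2]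
      obtain ⟨k1, k2⟩ := key
      have k3 := k2 k1
      refine ⟨by rw [mul_add]; omega, ?_⟩
      rw [abs_le] at *
      push_cast
      constructor <;> linarith [k3.1, k3.2, ih2.1, ih2.2]
  intro u v huv hu hv
  have p1 := (path u hu).2
  have p2 := (path v hv).2
  rw [huv] at p1
  have hΔ0 : 0 ≤ Δ := by
    have hb0 : 0 ≤ B 0 := by
      have := hloop 1 [] [] rfl
      simp at this
      linarith
    have : 0 ≤ B (2 * C + 3 * h + 2) := hb0.trans (hB (Nat.zero_le _))
    rw [hΔ]; positivity
  have q1 : (u.length : ℝ) * Δ ≤ l * Δ := by gcongr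
  have q2 : (v.length : ℝ) * Δ ≤ l * Δ := by gcongr
  rw [abs_le] at *
  constructor <;> linarith [p1.1, p1.2, p2.1, p2.2]

end Fill

section BSsec

/-- Indicator of the lattice of edges over which we integrate. -/
noncomputable def c1 (q : ℕ) (n : ℤ) (b : ℝ) : ℝ :=
  open Classical in if n = 0 ∧ ∃ k : ℤ, b = q * k then 1 else 0

lemma c1_abs_le (q : ℕ) (n : ℤ) (b : ℝ) : |c1 q n b| ≤ 1 := by
  unfold c1; split_ifs <;> simp

lemma c1_of_ne (q : ℕ) {n : ℤ} (hn : n ≠ 0) (b : ℝ) : c1 q n b = 0 := by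
  unfold c1; simp [hn]

lemma c1_shift (q : ℕ) (b : ℝ) : c1 q 0 (b + q) = c1 q 0 b := by
  unfold c1
  have : (∃ k : ℤ, b + q = q * k) ↔ ∃ k : ℤ, b = q * k := by
    constructor
    · rintro ⟨k, hk⟩; exact ⟨k - 1, by push_cast; linarith⟩
    · rintro ⟨k, hk⟩; exact ⟨k + 1, by push_cast; linarith⟩
  by_cases h : ∃ k : ℤ, b = q * k
  · rw [if_pos ⟨rfl, this.2 h⟩, if_pos ⟨rfl, h⟩]
  · rw [if_neg (fun h' => h (this.1 h'.2)), if_neg (fun h' => h h'.2)]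

/-- The state space on which `BS(p,q)` acts from the right: level, position, crossing count. -/
abbrev YY := ℤ × ℝ × ℝ

/-- Action of `a`. -/
noncomputable def permA (θ : ℝ) : Equiv.Perm YY where
  toFun y := (y.1, y.2.1 + θ ^ y.1, y.2.2)
  invFun y := (y.1, y.2.1 - θ ^ y.1, y.2.2)
  left_inv y := by simp
  right_inv y := by simp

/-- Action of `t`. -/
noncomputable def permT (q : ℕ) : Equiv.Perm YY where
  toFun y := (y.1 + 1, y.2.1, y.2.2 + c1 q y.1 y.2.1)
  invFun y := (y.1 - 1, y.2.1, y.2.2 - c1 q (y.1 - 1) y.2.1)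
  left_inv y := by simp
  right_inv y := by simp

lemma permA_pow (θ : ℝ) (k : ℕ) (y : YY) :
    (permA θ ^ k) y = (y.1, y.2.1 + k * θ ^ y.1, y.2.2) := by
  induction k with
  | zero => simp
  | succ k ih =>
    rw [pow_succ', Equiv.Perm.mul_apply, ih]
    simp only [permA, Equiv.coe_fn_mk]
    push_cast
    congr 2; ring

variable {p q : ℕ}

/-- The generators' images. -/
noncomputable def genMap (p q : ℕ) : Fin 2 → (Equiv.Perm YY)ᵐᵒᵖ :=
  ![MulOpposite.op (permA ((q : ℝ) / p)), MulOpposite.op (permT q)]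

lemma genMap_rel (hp : 1 ≤ p) (hq : 1 ≤ q) :
    ∀ r ∈ BSRels p q, FreeGroup.lift (genMap p q) r = 1 := by
  intro r hr
  rw [BSRels, Set.mem_singleton_iff] at hr
  subst hr
  simp only [map_mul, map_inv, map_pow, FreeGroup.lift_apply_of]
  rw [mul_inv_eq_one, mul_inv_eq_iff_eq_mul]
  simp only [genMap, Matrix.cons_val_zero, Matrix.cons_val_one]
  rw [← MulOpposite.op_pow, ← MulOpposite.op_pow, ← MulOpposite.op_mul, ← MulOpposite.op_mul]
  congr 1
  ext1 y
  obtain ⟨n, b, r⟩ := y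
  have hp' : (p : ℝ) ≠ 0 := by positivity
  have hq' : (q : ℝ) ≠ 0 := by positivity
  rw [Equiv.Perm.mul_apply, Equiv.Perm.mul_apply, permA_pow, permA_pow]
  simp only [permT, Equiv.coe_fn_mk]
  rw [zpow_add_one₀ (by positivity)]
  have h1 : (p : ℝ) * (((q : ℝ) / p) ^ n * (q / p)) = q * ((q : ℝ) / p) ^ n := by
    field_simp
  rw [h1]
  congr 3
  by_cases hn : n = 0
  · subst hn
    rw [zpow_zero, mul_one, c1_shift]
  · rw [c1_of_ne _ hn, c1_of_ne _ hn]

/-- The right action as a homomorphism. -/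
noncomputable def rho (hp : 1 ≤ p) (hq : 1 ≤ q) : BS p q →* (Equiv.Perm YY)ᵐᵒᵖ :=
  PresentedGroup.toGroup (genMap_rel hp hq)

/-- The state reached from the base point. -/
noncomputable def st (hp : 1 ≤ p) (hq : 1 ≤ q) (g : BS p q) : YY :=
  (MulOpposite.unop (rho hp hq g)) (0, 0, 0)

lemma st_mul (hp : 1 ≤ p) (hq : 1 ≤ q) (g s : BS p q) :
    st hp hq (g * s) = (MulOpposite.unop (rho hp hq s)) (st hp hq g) := by
  simp [st]

lemma st_one (hp : 1 ≤ p) (hq : 1 ≤ q) : st hp hq 1 = (0, 0, 0) := by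
  simp [st]

lemma rho_a (hp : 1 ≤ p) (hq : 1 ≤ q) :
    rho hp hq (BS.a p q) = MulOpposite.op (permA ((q : ℝ) / p)) := by
  simp [rho, BS.a, genMap]

lemma rho_t (hp : 1 ≤ p) (hq : 1 ≤ q) :
    rho hp hq (BS.t p q) = MulOpposite.op (permT q) := by
  simp [rho, BS.t, genMap]

lemma st_a_pow (hp : 1 ≤ p) (hq : 1 ≤ q) (g : BS p q) (k : ℕ) :
    st hp hq (g * BS.a p q ^ k) = ((st hp hq g).1,
      (st hp hq g).2.1 + k * ((q : ℝ) / p) ^ (st hp hq g).1, (st hp hq g).2.2) := by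
  rw [st_mul, map_pow, rho_a, MulOpposite.unop_pow, MulOpposite.unop_op, permA_pow]

lemma st_a (hp : 1 ≤ p) (hq : 1 ≤ q) (g : BS p q) :
    st hp hq (g * BS.a p q) = ((st hp hq g).1,
      (st hp hq g).2.1 + ((q : ℝ) / p) ^ (st hp hq g).1, (st hp hq g).2.2) := by
  rw [st_mul, rho_a]; rfl

lemma st_ai (hp : 1 ≤ p) (hq : 1 ≤ q) (g : BS p q) :
    st hp hq (g * (BS.a p q)⁻¹) = ((st hp hq g).1,
      (st hp hq g).2.1 - ((q : ℝ) / p) ^ (st hp hq g).1, (st hp hq g).2.2) := by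
  rw [st_mul, map_inv, rho_a]; rfl

lemma st_t (hp : 1 ≤ p) (hq : 1 ≤ q) (g : BS p q) :
    st hp hq (g * BS.t p q) = ((st hp hq g).1 + 1, (st hp hq g).2.1,
      (st hp hq g).2.2 + c1 q (st hp hq g).1 (st hp hq g).2.1) := by
  rw [st_mul, rho_t]; rfl

lemma st_ti (hp : 1 ≤ p) (hq : 1 ≤ q) (g : BS p q) :
    st hp hq (g * (BS.t p q)⁻¹) = ((st hp hq g).1 - 1, (st hp hq g).2.1,
      (st hp hq g).2.2 - c1 q ((st hp hq g).1 - 1) (st hp hq g).2.1) := by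
  rw [st_mul, map_inv, rho_t]; rfl

lemma lev_a (hp : 1 ≤ p) (hq : 1 ≤ q) : (st hp hq (BS.a p q)).1 = 0 := by
  rw [← one_mul (BS.a p q), st_a, st_one]

lemma lev_ai (hp : 1 ≤ p) (hq : 1 ≤ q) : (st hp hq (BS.a p q)⁻¹).1 = 0 := by
  rw [← one_mul (BS.a p q)⁻¹, st_ai, st_one]

lemma lev_t (hp : 1 ≤ p) (hq : 1 ≤ q) : (st hp hq (BS.t p q)).1 = 1 := by
  rw [← one_mul (BS.t p q), st_t, st_one]; rfl

lemma lev_ti (hp : 1 ≤ p) (hq : 1 ≤ q) : (st hp hq (BS.t p q)⁻¹).1 = -1 := by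
  rw [← one_mul (BS.t p q)⁻¹, st_ti, st_one]; rfl

/-- The weight of the edge from `g` to `g t`. -/
noncomputable def cc (hp : 1 ≤ p) (hq : 1 ≤ q) (g : BS p q) : ℝ :=
  c1 q (st hp hq g).1 (st hp hq g).2.1 * ((st hp hq g).2.1 / q)

/-- The edge function. -/
noncomputable def ee (hp : 1 ≤ p) (hq : 1 ≤ q) (g s : BS p q) : ℝ :=
  open Classical in
  if s = BS.t p q then cc hp hq g else if s = (BS.t p q)⁻¹ then - cc hp hq (g * s) else 0

lemma ee_t (hp : 1 ≤ p) (hq : 1 ≤ q) (g : BS p q) : ee hp hq g (BS.t p q) = cc hp hq g := by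
  simp [ee]

lemma ee_ti (hp : 1 ≤ p) (hq : 1 ≤ q) (g : BS p q) :
    ee hp hq g (BS.t p q)⁻¹ = - cc hp hq (g * (BS.t p q)⁻¹) := by
  have h : (BS.t p q)⁻¹ ≠ BS.t p q := fun h => by
    have := congrArg (fun x => (st hp hq x).1) h
    simp only [lev_t, lev_ti] at this
    omega
  unfold ee
  rw [if_neg h, if_pos rfl]

lemma ee_a (hp : 1 ≤ p) (hq : 1 ≤ q) (g : BS p q) : ee hp hq g (BS.a p q) = 0 := by
  have h : BS.a p q ≠ BS.t p q := fun h => by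
    have := congrArg (fun x => (st hp hq x).1) h
    simp only [lev_t, lev_a] at this
    omega
  have h' : BS.a p q ≠ (BS.t p q)⁻¹ := fun h => by
    have := congrArg (fun x => (st hp hq x).1) h
    simp only [lev_ti, lev_a] at this
    omega
  unfold ee
  rw [if_neg h, if_neg h']

lemma ee_ai (hp : 1 ≤ p) (hq : 1 ≤ q) (g : BS p q) : ee hp hq g (BS.a p q)⁻¹ = 0 := by
  have h : (BS.a p q)⁻¹ ≠ BS.t p q := fun h => by
    have := congrArg (fun x => (st hp hq x).1) h
    simp only [lev_t, lev_ai] at this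
    omega
  have h' : (BS.a p q)⁻¹ ≠ (BS.t p q)⁻¹ := fun h => by
    have := congrArg (fun x => (st hp hq x).1) h
    simp only [lev_ti, lev_ai] at this
    omega
  unfold ee
  rw [if_neg h, if_neg h']

/-- The generating set. -/
abbrev AA (p q : ℕ) : Set (BS p q) := {BS.a p q, BS.t p q}

lemma letter_cases (s : Alph (AA p q)) : s.val = BS.a p q ∨ s.val = BS.t p q ∨
    s.val = (BS.a p q)⁻¹ ∨ s.val = (BS.t p q)⁻¹ := by
  rcases s.2 with (h | h) | h
  · exact Or.inl h
  · exact Or.inr (Or.inl h)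
  · have h' : s.val⁻¹ ∈ AA p q := h
    rcases h' with h' | h'
    · exact Or.inr (Or.inr (Or.inl (inv_eq_iff_eq_inv.mp h')))
    · exact Or.inr (Or.inr (Or.inr (inv_eq_iff_eq_inv.mp h')))

lemma ee_inv (hp : 1 ≤ p) (hq : 1 ≤ q) (g : BS p q) : ∀ s ∈ AA p q,
    ee hp hq (g * s) s⁻¹ = - ee hp hq g s := by
  rintro s (rfl | rfl)
  · rw [ee_a, ee_ai, neg_zero]
  · rw [ee_t, ee_ti, mul_inv_cancel_right]

/-- The edge function, corrected by a multiple of the crossing count. -/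
noncomputable def dd (hp : 1 ≤ p) (hq : 1 ≤ q) (β : ℝ) (g s : BS p q) : ℝ :=
  ee hp hq g s - β * ((st hp hq (g * s)).2.2 - (st hp hq g).2.2)

lemma Phi_dd (hp : 1 ≤ p) (hq : 1 ≤ q) (β : ℝ) (g : BS p q) (w : List (Alph (AA p q))) :
    Phi _ (dd hp hq β) g w = Phi _ (ee hp hq) g w -
      β * ((st hp hq (g * eval _ w)).2.2 - (st hp hq g).2.2) := by
  induction w generalizing g with
  | nil => simp
  | cons s w ih =>
    rw [Phi_cons, Phi_cons, ih, eval_cons, dd, mul_assoc]; ring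

/-- Value of `dd` on the letters. -/
lemma dd_letter (hp : 1 ≤ p) (hq : 1 ≤ q) (β : ℝ) (g : BS p q) (s : Alph (AA p q)) :
    (dd hp hq β g s.val = 0 ∧ (st hp hq (g * s.val)).1 = (st hp hq g).1 ∧
      |(st hp hq (g * s.val)).2.1 - (st hp hq g).2.1| ≤ ((q : ℝ) / p) ^ (st hp hq g).1) ∨
    (dd hp hq β g s.val = c1 q (st hp hq g).1 (st hp hq g).2.1 * ((st hp hq g).2.1 / q - β) ∧
      (st hp hq (g * s.val)).1 = (st hp hq g).1 + 1 ∧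
      (st hp hq (g * s.val)).2.1 = (st hp hq g).2.1) ∨
    (dd hp hq β g s.val =
        - (c1 q ((st hp hq g).1 - 1) (st hp hq g).2.1 * ((st hp hq g).2.1 / q - β)) ∧
      (st hp hq (g * s.val)).1 = (st hp hq g).1 - 1 ∧
      (st hp hq (g * s.val)).2.1 = (st hp hq g).2.1) := by
  have hθ : (0 : ℝ) ≤ ((q : ℝ) / p) ^ (st hp hq g).1 := by positivity
  rcases letter_cases s with h | h | h | h <;> rw [h]
  · left
    refine ⟨?_, ?_, ?_⟩
    · rw [dd, ee_a, st_a]; simp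
    · rw [st_a]
    · rw [st_a]; simp [abs_of_nonneg hθ]
  · right; left
    refine ⟨?_, ?_, ?_⟩
    · rw [dd, ee_t, st_t, cc]; ring
    · rw [st_t]
    · rw [st_t]
  · left
    refine ⟨?_, ?_, ?_⟩
    · rw [dd, ee_ai, st_ai]; simp
    · rw [st_ai]
    · rw [st_ai]; simp [abs_of_nonneg hθ]
  · right; right
    refine ⟨?_, ?_, ?_⟩
    · rw [dd, ee_ti, cc, st_ti]; ring
    · rw [st_ti]
    · rw [st_ti]

lemma Phi_dd_zero (hp : 1 ≤ p) (hq : 1 ≤ q) (β : ℝ) (g : BS p q) (w : List (Alph (AA p q)))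
    (hw : (w.length : ℤ) < (st hp hq g).1) : Phi _ (dd hp hq β) g w = 0 := by
  induction w generalizing g with
  | nil => simp
  | cons s w ih =>
    rw [List.length_cons] at hw
    push_cast at hw
    rw [Phi_cons]
    rcases dd_letter hp hq β g s with ⟨h1, h2, -⟩ | ⟨h1, h2, -⟩ | ⟨h1, h2, -⟩
    · rw [h1, ih _ (by rw [h2]; omega), add_zero]
    · rw [h1, ih _ (by rw [h2]; omega), c1_of_ne _ (by omega)]; simp
    · rw [h1, ih _ (by rw [h2]; omega), c1_of_ne _ (by omega)]; simp

lemma Phi_dd_bound (hp : 1 ≤ p) (hpq : p < q) (hq : 1 ≤ q) (β : ℝ) (g : BS p q)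
    (w : List (Alph (AA p q))) :
    |Phi _ (dd hp hq β) g w| ≤ w.length *
      (|(st hp hq g).2.1 / q - β| + w.length * ((q : ℝ) / p) ^ w.length) := by
  have hθ : (1 : ℝ) ≤ (q : ℝ) / p := by
    rw [one_le_div (by positivity)]; exact_mod_cast hpq.le
  induction w generalizing g with
  | nil => simp
  | cons s w ih =>
    by_cases hlev : ((s :: w).length : ℤ) < (st hp hq g).1
    · rw [Phi_dd_zero _ _ _ _ _ hlev, abs_zero]; positivity
    rw [Phi_cons, List.length_cons]
    rw [List.length_cons] at hlev
    push Not at hlev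
    have hi := ih (g * s.val)
    set θ : ℝ := (q : ℝ) / p with hθdef
    have hm : θ ^ w.length ≤ θ ^ (w.length + 1) := pow_le_pow_right₀ hθ (by omega)
    have h0 : 0 ≤ θ ^ w.length := by positivity
    have hl0 : (0 : ℝ) ≤ w.length := by positivity
    have hθ1 : 0 ≤ θ ^ (w.length + 1) := by positivity
    have hD := abs_nonneg ((st hp hq g).2.1 / q - β)
    have tri := abs_add_le (dd hp hq β g s.val) (Phi _ (dd hp hq β) (g * s.val) w)
    have key : (w.length : ℝ) * (w.length * θ ^ w.length) ≤
        (w.length : ℝ) * (w.length * θ ^ (w.length + 1)) := by gcongr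
    push_cast
    rcases dd_letter hp hq β g s with ⟨h1, h2, h3⟩ | ⟨h1, h2, h3⟩ | ⟨h1, h2, h3⟩
    · have hz : θ ^ (st hp hq g).1 ≤ θ ^ (w.length + 1) := by
        rw [← zpow_natCast]
        exact zpow_le_zpow_right₀ hθ (by exact_mod_cast hlev)
      have hdiff : |(st hp hq (g * s.val)).2.1 / q - β| ≤
          |(st hp hq g).2.1 / q - β| + θ ^ (w.length + 1) := by
        have e1 : (st hp hq (g * s.val)).2.1 / q - β = ((st hp hq g).2.1 / q - β) +
            ((st hp hq (g * s.val)).2.1 - (st hp hq g).2.1) / q := by ring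
        rw [e1]
        refine (abs_add_le _ _).trans ?_
        gcongr
        rw [abs_div, Nat.abs_cast]
        have : (1 : ℝ) ≤ q := by exact_mod_cast hq
        exact (div_le_self (abs_nonneg _) this).trans (h3.trans hz)
      have : (w.length : ℝ) * |(st hp hq (g * s.val)).2.1 / q - β| ≤
          w.length * (|(st hp hq g).2.1 / q - β| + θ ^ (w.length + 1)) := by gcongr
      rw [h1, zero_add]
      nlinarith
    · rw [h3] at hi
      have hc : |dd hp hq β g s.val| ≤ |(st hp hq g).2.1 / q - β| := by
        rw [h1, abs_mul]
        exact mul_le_of_le_one_left (abs_nonneg _) (c1_abs_le _ _ _)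
      nlinarith
    · rw [h3] at hi
      have hc : |dd hp hq β g s.val| ≤ |(st hp hq g).2.1 / q - β| := by
        rw [h1, abs_neg, abs_mul]
        exact mul_le_of_le_one_left (abs_nonneg _) (c1_abs_le _ _ _)
      nlinarith

/-- The bound function. -/
noncomputable def BB (p q : ℕ) (m : ℕ) : ℝ := m * (m * ((q : ℝ) / p) ^ m)

lemma BB_mono (hp : 1 ≤ p) (hpq : p < q) : Monotone (BB p q) := by
  have hθ : (1 : ℝ) ≤ (q : ℝ) / p := by
    rw [one_le_div (by positivity)]; exact_mod_cast hpq.le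
  intro m n hmn
  unfold BB
  gcongr

lemma loop_bound (hp : 1 ≤ p) (hpq : p < q) (hq : 1 ≤ q) (g : BS p q)
    (u v : List (Alph (AA p q))) (huv : eval _ u = eval _ v) :
    |Phi _ (ee hp hq) g u - Phi _ (ee hp hq) g v| ≤ BB p q u.length + BB p q v.length := by
  have h1 := Phi_dd_bound hp hpq hq ((st hp hq g).2.1 / q) g u
  have h2 := Phi_dd_bound hp hpq hq ((st hp hq g).2.1 / q) g v
  rw [Phi_dd] at h1 h2
  rw [huv] at h1
  rw [sub_self, abs_zero, zero_add] at h1 h2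
  unfold BB
  rw [abs_le] at *
  constructor <;> linarith [h1.1, h1.2, h2.1, h2.2]

lemma gens_AA : Gens (AA p q) := by
  have key : ∀ g : BS p q, g ∈ Subgroup.closure (AA p q) := by
    intro g
    have : Subgroup.closure (Set.range (PresentedGroup.of (rels := BSRels p q))) = ⊤ :=
      PresentedGroup.closure_range_of _
    have hg : g ∈ Subgroup.closure (Set.range (PresentedGroup.of (rels := BSRels p q))) := by
      rw [this]; trivial
    refine Subgroup.closure_mono ?_ hg
    rintro _ ⟨i, rfl⟩
    fin_cases i
    · left; rfl
    · right; rfl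
  intro g
  induction key g using Subgroup.closure_induction with
  | mem x hx =>
    exact ⟨[mkL _ x (Set.mem_union_left _ hx)], by rw [eval_mkL, eval_nil, mul_one]⟩
  | one => exact ⟨[], rfl⟩
  | mul x y _ _ hx hy =>
    obtain ⟨u, hu⟩ := hx
    obtain ⟨v, hv⟩ := hy
    exact ⟨u ++ v, by rw [eval_append, hu, hv]⟩
  | inv x _ hx =>
    obtain ⟨u, hu⟩ := hx
    obtain ⟨v, hv, -⟩ := exists_inv_word _ u
    exact ⟨v, by rw [hv, hu]⟩

/-- The letter `a`. -/
def la (p q : ℕ) : Alph (AA p q) := mkL _ (BS.a p q) (Set.mem_union_left _ (Or.inl rfl))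
/-- The letter `t`. -/
def lt (p q : ℕ) : Alph (AA p q) := mkL _ (BS.t p q) (Set.mem_union_left _ (Or.inr rfl))
/-- The letter `t⁻¹`. -/
def lti (p q : ℕ) : Alph (AA p q) := mkL _ (BS.t p q)⁻¹
  (Set.mem_union_right _ (by rw [Set.mem_inv, inv_inv]; exact Or.inr rfl))

/-- Exponents of the distorted powers of `a`. -/
def uN (p q : ℕ) : ℕ → ℕ
  | 0 => 1
  | i + 1 => q * ((uN p q i + p - 1) / p)

/-- Short words representing `a ^ uN i`. -/
def uW (p q : ℕ) : ℕ → List (Alph (AA p q))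
  | 0 => [la p q]
  | i + 1 => lt p q :: (uW p q i ++
      (List.replicate (p * ((uN p q i + p - 1) / p) - uN p q i) (la p q) ++ [lti p q]))

lemma ceil_bounds (hp : 1 ≤ p) (N : ℕ) :
    N ≤ p * ((N + p - 1) / p) ∧ p * ((N + p - 1) / p) - N ≤ p := by
  have h1 := Nat.div_add_mod (N + p - 1) p
  have h2 := Nat.mod_lt (N + p - 1) (show 0 < p by omega)
  omega

lemma eval_replicate_la (r : ℕ) : eval _ (List.replicate r (la p q)) = BS.a p q ^ r := by
  induction r with
  | zero => simp
  | succ r ih => rw [List.replicate_succ, la, eval_mkL, ← la, ih, pow_succ']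

lemma Phi_replicate_la (hp : 1 ≤ p) (hq : 1 ≤ q) (g : BS p q) (r : ℕ) :
    Phi _ (ee hp hq) g (List.replicate r (la p q)) = 0 := by
  induction r generalizing g with
  | zero => simp
  | succ r ih => rw [List.replicate_succ, la, Phi_mkL, ← la, ih, ee_a, add_zero]

lemma BS_rel : BS.t p q * BS.a p q ^ p * (BS.t p q)⁻¹ = BS.a p q ^ q := by
  have h : (PresentedGroup.mk (BSRels p q)) (FreeGroup.of 1 * FreeGroup.of 0 ^ p *
      (FreeGroup.of 1)⁻¹ * (FreeGroup.of 0 ^ q)⁻¹) = 1 := by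
    apply PresentedGroup.one_of_mem
    rfl
  simp only [map_mul, map_inv, map_pow] at h
  exact mul_inv_eq_one.mp h

lemma BS_rel_pow (m : ℕ) :
    BS.t p q * BS.a p q ^ (p * m) * (BS.t p q)⁻¹ = BS.a p q ^ (q * m) := by
  rw [pow_mul, pow_mul, ← BS_rel, conj_pow]

lemma eval_uW (hp : 1 ≤ p) (i : ℕ) : eval _ (uW p q i) = BS.a p q ^ uN p q i := by
  induction i with
  | zero => simp only [uW, uN, la, eval_mkL, eval_nil, mul_one, pow_one]
  | succ i ih =>
    simp only [uW, uN, lt, lti, eval_mkL, eval_append, ih, eval_replicate_la, eval_nil, mul_one]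
    rw [← BS_rel_pow, ← mul_assoc (BS.a p q ^ _), ← pow_add,
      Nat.add_sub_cancel' (ceil_bounds hp _).1, mul_assoc]

lemma length_uW (hp : 1 ≤ p) (i : ℕ) : (uW p q i).length ≤ 1 + (p + 2) * i := by
  induction i with
  | zero => simp [uW]
  | succ i ih =>
    have := (ceil_bounds hp (uN p q i)).2
    simp only [uW, List.length_cons, List.length_append, List.length_replicate, List.length_nil]
    rw [mul_add]
    omega

lemma uN_ge (hp : 1 ≤ p) (i : ℕ) : ((q : ℝ) / p) ^ i ≤ uN p q i := by
  induction i with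
  | zero => simp [uN]
  | succ i ih =>
    have h1 : (uN p q i : ℝ) ≤ p * (((uN p q i + p - 1) / p : ℕ) : ℝ) := by
      exact_mod_cast (ceil_bounds hp _).1
    have hp' : (0 : ℝ) < p := by positivity
    rw [pow_succ]
    calc ((q : ℝ) / p) ^ i * (q / p) ≤ (p * (((uN p q i + p - 1) / p : ℕ) : ℝ)) * (q / p) := by
          gcongr; exact ih.trans h1
      _ = uN p q (i + 1) := by
          simp only [uN]; push_cast; field_simp

lemma cc_of_lev (hp : 1 ≤ p) (hq : 1 ≤ q) (g : BS p q) (h : (st hp hq g).1 ≠ 0) :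
    cc hp hq g = 0 := by
  rw [cc, c1_of_ne _ h, zero_mul]

lemma Phi_uW (hp : 1 ≤ p) (hq : 1 ≤ q) (i : ℕ) :
    (∀ g, 1 ≤ (st hp hq g).1 → Phi _ (ee hp hq) g (uW p q i) = 0) ∧
    (∀ g, 0 ≤ (st hp hq g).1 → Phi _ (ee hp hq) g (uW p q (i + 1)) =
      cc hp hq g - cc hp hq (g * BS.a p q ^ uN p q (i + 1))) := by
  have step : ∀ i, (∀ g, 1 ≤ (st hp hq g).1 → Phi _ (ee hp hq) g (uW p q i) = 0) →
    (∀ g, 0 ≤ (st hp hq g).1 → Phi _ (ee hp hq) g (uW p q (i + 1)) =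
      cc hp hq g - cc hp hq (g * BS.a p q ^ uN p q (i + 1))) := by
    intro i hZ g hg
    have hev := eval_uW (q := q) hp (i + 1)
    rw [← hev]
    simp only [uW, lt, lti, eval_mkL, eval_append, eval_nil, Phi_append, Phi_mkL, Phi_nil,
      Phi_replicate_la, ee_t, ee_ti]
    rw [hZ (g * BS.t p q) (by rw [st_t]; simp only; omega)]
    simp only [mul_assoc, mul_one]
    ring
  have hZ : ∀ i, ∀ g, 1 ≤ (st hp hq g).1 → Phi _ (ee hp hq) g (uW p q i) = 0 := by
    intro i
    induction i with
    | zero =>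
      intro g _
      simp only [uW, la, Phi_mkL, Phi_nil, ee_a, add_zero]
    | succ i ih =>
      intro g hg
      rw [step i ih g (by omega), cc_of_lev _ _ _ (by omega),
        cc_of_lev _ _ _ (by rw [st_a_pow]; simp only; omega), sub_zero]
  exact ⟨hZ i, step i (hZ i)⟩

lemma lower (hp : 1 ≤ p) (hpq : p < q) (hq : 1 ≤ q) (i : ℕ) :
    ((q : ℝ) / p) ^ (i + 1) / q ≤ |Phi _ (ee hp hq) 1 (uW p q (i + 1) ++ [la p q]) -
      Phi _ (ee hp hq) 1 (la p q :: uW p q (i + 1))| := by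
  have hS := (Phi_uW hp hq i).2
  have hq0 : (q : ℝ) ≠ 0 := by positivity
  obtain ⟨m, hm⟩ : ∃ m, uN p q (i + 1) = q * m := ⟨_, rfl⟩
  have hst1 : st hp hq (1 : BS p q) = (0, 0, 0) := st_one hp hq
  have e1 : cc hp hq (1 : BS p q) = 0 := by simp [cc, hst1]
  have e2 : cc hp hq (1 * BS.a p q ^ uN p q (i + 1)) = uN p q (i + 1) / q := by
    rw [cc, st_a_pow, hst1]
    have : c1 q 0 (0 + (uN p q (i + 1) : ℝ) * ((q : ℝ) / p) ^ (0 : ℤ)) = 1 := by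
      unfold c1
      rw [if_pos]
      exact ⟨rfl, m, by rw [hm]; push_cast; simp⟩
    simp only [this]
    simp
  have hsta : st hp hq (1 * BS.a p q) = (0, 1, 0) := by
    rw [st_a, hst1]; simp
  have e3 : cc hp hq (1 * BS.a p q) = 0 := by
    rw [cc, hsta]
    have : c1 q 0 1 = 0 := by
      unfold c1
      rw [if_neg]
      rintro ⟨-, k, hk⟩
      have hk' : (1 : ℤ) = q * k := by exact_mod_cast hk
      have := Int.le_of_dvd one_pos ⟨k, hk'⟩
      omega
    simp [this]
  have e4 : cc hp hq (1 * BS.a p q * BS.a p q ^ uN p q (i + 1)) = 0 := by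
    rw [cc, st_a_pow, hsta]
    have : c1 q 0 (1 + (uN p q (i + 1) : ℝ) * ((q : ℝ) / p) ^ (0 : ℤ)) = 0 := by
      unfold c1
      rw [if_neg]
      rintro ⟨-, k, hk⟩
      rw [hm, zpow_zero, mul_one] at hk
      have hk' : (1 : ℤ) + q * m = q * k := by exact_mod_cast hk
      have := Int.le_of_dvd one_pos ⟨k - m, by rw [mul_sub, ← hk']; ring⟩
      omega
    simp only [this]
    simp
  rw [Phi_append, hS 1 (by rw [hst1])]
  simp only [la, Phi_mkL, Phi_nil, ee_a]
  rw [hS _ (by rw [hsta]), e1, e2, e3, e4]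
  have := uN_ge (q := q) hp (i + 1)
  rw [abs_sub_comm]
  refine le_trans ?_ (le_abs_self _)
  simp only [zero_sub, sub_zero, add_zero, neg_neg]
  gcongr

end BSsec

/-- The numerical contradiction. -/
lemma eventually_small (θ : ℝ) (hθ : 1 < θ) (K : ℝ) :
    ∃ j₀ : ℕ, ∀ j, j₀ ≤ j → K * (j : ℝ) ^ 4 < θ ^ j := by
  have h := tendsto_pow_const_div_const_pow_of_one_lt 4 hθ
  have hpos : (0 : ℝ) < 1 / (|K| + 1) := by positivity
  have h2 := h.eventually (gt_mem_nhds hpos)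
  obtain ⟨j₀, hj⟩ := Filter.eventually_atTop.mp h2
  refine ⟨j₀, fun j hle => ?_⟩
  have h3 := hj j hle
  have hθj : 0 < θ ^ j := by positivity
  have hK : (0 : ℝ) < |K| + 1 := by positivity
  rw [div_lt_div_iff₀ hθj hK] at h3
  have h4 : (0 : ℝ) ≤ (j : ℝ) ^ 4 := by positivity
  nlinarith [le_abs_self K]

lemma numeric {p q C D M₀ i j n m : ℕ} {θ : ℝ} (hθ : 1 < θ) (hD : 1 ≤ D) (hj : 1 ≤ j)
    (hij : i ≤ 3 * j) (hji : 2 * j ≤ i) (hn : n ≤ 2 * D * i) (hm : m ≤ M₀ + j) (hq : 1 ≤ q)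
    (h : θ ^ i / q ≤ 2 * (((p + 2) * i + 2 : ℕ) : ℝ) *
      (((n : ℝ) + 2) * (2 * (m * (m * θ ^ m))))) :
    θ ^ j ≤ (q * (2 * ((p + 4) * 3) * ((8 * D) * (2 * ((M₀ + 1) ^ 2 * θ ^ M₀))))) *
      (j : ℝ) ^ 4 := by
  have hθ0 : 0 < θ := by linarith
  have hj' : (1 : ℝ) ≤ j := by exact_mod_cast hj
  have hq' : (0 : ℝ) < q := by positivity
  rw [div_le_iff₀ hq'] at h
  have h1 : θ ^ j * θ ^ j ≤ θ ^ i := by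
    rw [← pow_add]; exact pow_le_pow_right₀ hθ.le (by omega)
  have a1 : (((p + 2) * i + 2 : ℕ) : ℝ) ≤ (p + 4) * 3 * j := by
    have : (p + 2) * i + 2 ≤ (p + 4) * 3 * j := by nlinarith
    exact_mod_cast this
  have a2 : (n : ℝ) + 2 ≤ 8 * D * j := by
    have : n + 2 ≤ 8 * D * j := by nlinarith
    exact_mod_cast this
  have a3 : (m : ℝ) ≤ (M₀ + 1) * j := by
    have : m ≤ (M₀ + 1) * j := by nlinarith
    exact_mod_cast this
  have a4 : θ ^ m ≤ θ ^ M₀ * θ ^ j := by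
    rw [← pow_add]; exact pow_le_pow_right₀ hθ.le hm
  have a5 : 2 * (((p + 2) * i + 2 : ℕ) : ℝ) * (((n : ℝ) + 2) * (2 * (m * (m * θ ^ m)))) * q ≤
      2 * ((p + 4) * 3 * j) * ((8 * D * j) * (2 * (((M₀ + 1) * j) *
        (((M₀ + 1) * j) * (θ ^ M₀ * θ ^ j))))) * q := by
    gcongr
  have hpos : 0 < θ ^ j := by positivity
  have a6 := (h1.trans h).trans a5
  refine le_of_mul_le_mul_right (a6.trans (le_of_eq ?_)) hpos
  ring

end CAG

open CAG in
/-- For `1 ≤ p < q` and every `f ∈ 𝔉` with `f ≺ 𝔦` (where `𝔦(n) = n`), the Baumslag–Solitar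
group `BS(p,q)` does not belong to the class `ℬ_f`. -/
theorem BS_not_mem_classB_of_prec_ident (p q : ℕ) (hp : 1 ≤ p) (hpq : p < q)
    (f : FFun) (hf : f.Prec identF) :
    ¬ InB ({BS.a p q, BS.t p q} : Set (BS p q)) f := by
  rintro ⟨L, ψ, hψ, K, M, N, hK, hM, hN, hQN, hdist⟩
  have hq : 1 ≤ q := by omega
  obtain ⟨C, c₀, hfill⟩ := filling (gens_AA (p := p) (q := q)) (Set.toFinite _) hψ (ee hp hq)
    (ee_inv hp hq) (BB p q) (BB_mono hp hpq) (loop_bound hp hpq hq)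
  have hθ : (1 : ℝ) < (q : ℝ) / p := by
    rw [one_lt_div (by positivity)]; exact_mod_cast hpq
  obtain ⟨D, hD⟩ : ∃ D, D = c₀ + C * (p + 4) + C + 1 := ⟨_, rfl⟩
  have hD1 : 1 ≤ D := by omega
  obtain ⟨j₀, hj₀⟩ := eventually_small _ hθ
    (q * (2 * ((p + 4) * 3) * ((8 * D) * (2 * (((2 * C + 2 : ℕ) + 1) ^ 2 *
      ((q : ℝ) / p) ^ (2 * C + 2))))))
  -- a scale at which the representation is very close to the evaluation map
  obtain ⟨n, hn, hlt⟩ : ∃ n, N + D * (2 * j₀ + 2) ≤ n ∧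
      (K * (24 * D) : ℕ) * f.toFun (M * n) < n := by
    by_contra! hcon
    refine hf.2 ⟨hf.1, K * (24 * D), M, N + D * (2 * j₀ + 2), by positivity, hM, by omega, ?_,
      by omega, fun n hn => hcon n hn⟩
    show 1 ≤ _
    omega
  obtain ⟨i, hi⟩ : ∃ i, i = n / D := ⟨_, rfl⟩
  have hi1 : 2 * j₀ + 2 ≤ i := by
    rw [hi, Nat.le_div_iff_mul_le (by omega), mul_comm]; omega
  have hi2 : D * i ≤ n := by rw [hi]; exact Nat.mul_div_le n D
  have hi3 : n < D * (i + 1) := by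
    rw [hi]; exact Nat.lt_mul_div_succ n (by omega)
  have hi4 : n ≤ 2 * D * i := by nlinarith
  obtain ⟨h, hh⟩ : ∃ h, h = n / (24 * D) := ⟨_, rfl⟩
  have hh1 : 24 * D * h ≤ n := by rw [hh]; exact Nat.mul_div_le n _
  have hh2 : 12 * h ≤ i := by
    have : (2 * D) * (12 * h) ≤ (2 * D) * i := by nlinarith
    exact Nat.le_of_mul_le_mul_left this (by omega)
  have hclose : ∀ w ∈ L, w.length ≤ n →
      cayleyDist (AA p q) (eval (AA p q) w) (ψ w) ≤ h := by
    intro w hw hwn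
    have h1 := hdist n (by omega) w hw hwn
    rw [hh, Nat.le_div_iff_mul_le (by omega)]
    have h2 : (cayleyDist (AA p q) (eval (AA p q) w) (ψ w) : ℝ) * (24 * D) < n := by
      calc _ ≤ (K * f.toFun (M * n)) * (24 * D) := by gcongr
        _ = (K * (24 * D) : ℕ) * f.toFun (M * n) := by push_cast; ring
        _ < n := hlt
    exact_mod_cast h2.le
  obtain ⟨i', rfl⟩ : ∃ i', i = i' + 1 := ⟨i - 1, by omega⟩
  have hlow := lower hp hpq hq i'
  have hlen := length_uW (q := q) hp (i' + 1)
  have hup := hfill n h ((p + 2) * (i' + 1) + 2) (by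
      refine le_trans ?_ hi2
      rw [hD]
      have : C * 1 ≤ C * (i' + 1) := Nat.mul_le_mul_left _ (by omega)
      have : c₀ * 1 ≤ c₀ * (i' + 1) := Nat.mul_le_mul_left _ (by omega)
      nlinarith) hclose
    (uW p q (i' + 1) ++ [la p q]) (la p q :: uW p q (i' + 1)) (by
      simp only [la, eval_append, eval_mkL, eval_nil, eval_uW hp, mul_one]
      rw [← pow_succ, ← pow_succ'])
    (by simp only [List.length_append, List.length_cons, List.length_nil]; omega)
    (by simp only [List.length_cons]; omega)
  have hfin := hlow.trans hup
  unfold BB at hfin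
  have hcontra := numeric (p := p) (C := C) (D := D) (M₀ := 2 * C + 2) (i := i' + 1)
    (j := (i' + 1) / 2) hθ hD1 (by omega) (by omega) (by omega) hi4 (by omega) hq hfin
  exact absurd hcontra (not_le.mpr (hj₀ _ (by omega)))
end

section
/- The lamplighter group ℤ₂ ≀ ℤ belongs to the class ℬ_𝔦, where 𝔦 is the identity function 𝔦(n) = n. -/
namespace CAG

/-- Configurations of lamps: finitely supported functions `ℤ → ℤ₂`. -/
abbrev Lamps := ℤ →₀ ZMod 2

/-- Shift of a lamp configuration by `m`. -/
noncomputable def lampShift (m : ℤ) (f : Lamps) : Lamps := Finsupp.mapDomain (· + m) f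

lemma lampShift_zero (f : Lamps) : lampShift 0 f = f := by
  simp only [lampShift, add_zero]
  exact Finsupp.mapDomain_id

lemma lampShift_lampShift (m m' : ℤ) (f : Lamps) :
    lampShift m (lampShift m' f) = lampShift (m' + m) f := by
  rw [lampShift, lampShift, lampShift, ← Finsupp.mapDomain_comp]
  congr 1
  funext x
  simp [add_assoc]

lemma lampShift_add (m : ℤ) (f g : Lamps) :
    lampShift m (f + g) = lampShift m f + lampShift m g :=
  Finsupp.mapDomain_add

/-- The lamplighter group `ℤ₂ ≀ ℤ = (⊕_{i ∈ ℤ} ℤ₂) ⋊ ℤ`: elements are pairs `(f, m)` of a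
finitely supported lamp configuration `f : ℤ → ℤ₂` and the lamplighter position `m ∈ ℤ`,
with `ℤ` acting on the lamp configurations by shift. -/
def Lamplighter := Lamps × ℤ

noncomputable instance : Mul Lamplighter :=
  ⟨fun g h => (g.1 + lampShift g.2 h.1, g.2 + h.2)⟩

instance : One Lamplighter := ⟨((0 : Lamps), (0 : ℤ))⟩

noncomputable instance : Inv Lamplighter := ⟨fun g => (lampShift (-g.2) g.1, -g.2)⟩

lemma Lamplighter.mul_def (g h : Lamplighter) :
    g * h = (g.1 + lampShift g.2 h.1, g.2 + h.2) := rfl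

lemma Lamplighter.one_def : (1 : Lamplighter) = ((0 : Lamps), (0 : ℤ)) := rfl

lemma Lamplighter.inv_def (g : Lamplighter) : g⁻¹ = (lampShift (-g.2) g.1, -g.2) := rfl

noncomputable instance : Group Lamplighter where
  mul_assoc a b c := by
    rw [Lamplighter.mul_def, Lamplighter.mul_def, Lamplighter.mul_def, Lamplighter.mul_def]
    refine Prod.ext ?_ (add_assoc _ _ _)
    show (a.1 + lampShift a.2 b.1) + lampShift (a.2 + b.2) c.1
        = a.1 + lampShift a.2 (b.1 + lampShift b.2 c.1)
    rw [lampShift_add, lampShift_lampShift, add_comm a.2 b.2, add_assoc]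
  one_mul a := by
    rw [Lamplighter.mul_def, Lamplighter.one_def]
    refine Prod.ext ?_ (zero_add _)
    show (0 : Lamps) + lampShift 0 a.1 = a.1
    rw [lampShift_zero, zero_add]
  mul_one a := by
    rw [Lamplighter.mul_def, Lamplighter.one_def]
    refine Prod.ext ?_ (add_zero _)
    show a.1 + lampShift a.2 (0 : Lamps) = a.1
    rw [lampShift, Finsupp.mapDomain_zero, add_zero]
  inv_mul_cancel a := by
    rw [Lamplighter.mul_def, Lamplighter.inv_def, Lamplighter.one_def]
    refine Prod.ext ?_ (neg_add_cancel _)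
    show lampShift (-a.2) a.1 + lampShift (-a.2) a.1 = (0 : Lamps)
    ext i
    have h2 : ∀ x : ZMod 2, x + x = 0 := by decide
    simp [h2]

/-- The generator `a` of the lamplighter group: the lamp at the origin is lit, the
lamplighter points at the origin. -/
noncomputable def Lamplighter.a : Lamplighter := (Finsupp.single 0 1, 0)

/-- The generator `t` of the lamplighter group: all lamps unlit, the lamplighter
points at position `1`. -/
def Lamplighter.t : Lamplighter := ((0 : Lamps), 1)

end CAG

namespace LampProof

open CAG

/-! ### Regular languages -/

section Reg

variable {β : Type}

/-- The language of the words with a given property. -/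
def lng (P : List β → Prop) : Language β := {w | P w}

@[simp] lemma mem_lng {P : List β → Prop} {w : List β} : w ∈ lng P ↔ P w := Iff.rfl

lemma mem_single {w x : List β} : w ∈ ({x} : Language β) ↔ w = x := Iff.rfl

lemma reg_mul {L₁ L₂ : Language β} (h₁ : L₁.IsRegular) (h₂ : L₂.IsRegular) :
    (L₁ * L₂).IsRegular := by
  rw [Language.isRegular_iff_finite_range_leftQuotient] at *
  refine Set.Finite.subset (Set.Finite.image2
    (fun (Q : Language β) (F : Set (Language β)) => (lng fun w => w ∈ Q * L₂ ∨ ∃ K ∈ F, w ∈ K))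
    h₁ h₂.finite_subsets) ?_
  rintro _ ⟨x, rfl⟩
  refine ⟨L₁.leftQuotient x, ⟨x, rfl⟩,
    {K | ∃ y z, x = y ++ z ∧ y ∈ L₁ ∧ K = L₂.leftQuotient z}, ?_, ?_⟩
  · rintro _ ⟨y, z, -, -, rfl⟩
    exact ⟨z, rfl⟩
  · apply Language.ext
    intro w
    rw [Language.mem_leftQuotient, Language.mem_mul]
    change (w ∈ L₁.leftQuotient x * L₂ ∨ _) ↔ _
    rw [Language.mem_mul]
    constructor
    · rintro (⟨p, hp, q, hq, rfl⟩ | ⟨_, ⟨y, z, rfl, hy, rfl⟩, hw⟩)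
      · exact ⟨x ++ p, hp, q, hq, by simp⟩
      · exact ⟨y, hy, z ++ w, hw, by simp⟩
    · rintro ⟨p, hp, q, hq, h⟩
      rw [List.append_eq_append_iff] at h
      rcases h with ⟨r, rfl, rfl⟩ | ⟨r, rfl, rfl⟩
      · exact Or.inr ⟨_, ⟨p, r, rfl, hp, rfl⟩, hq⟩
      · exact Or.inl ⟨r, hp, q, hq, rfl⟩

lemma reg_zero : (0 : Language β).IsRegular :=
  ⟨Unit, inferInstance, ⟨fun _ _ => (), (), ∅⟩, rfl⟩

lemma reg_one : ({[]} : Language β).IsRegular := by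
  refine ⟨Bool, inferInstance, ⟨fun _ _ => false, true, {true}⟩, ?_⟩
  ext w
  have key : ∀ w : List β, DFA.evalFrom ⟨fun _ _ => false, true, {true}⟩ false w = false := by
    intro w
    induction w with
    | nil => rfl
    | cons c w ih => exact ih
  rw [DFA.mem_accepts]
  cases w with
  | nil => simp [mem_single]
  | cons c w =>
    have := key w
    simp only [DFA.eval, DFA.evalFrom_cons, this]
    simp [mem_single]

lemma reg_cons (c : β) : ({[c]} : Language β).IsRegular := by
  classical
  rw [Language.isRegular_iff_finite_range_leftQuotient]
  refine Set.Finite.subset (s := {{[c]}, {[]}, 0}) (by simp) ?_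
  rintro _ ⟨x, rfl⟩
  simp only [Set.mem_insert_iff, Set.mem_singleton_iff]
  rcases x with _ | ⟨d, _ | ⟨d', x⟩⟩
  · left; rfl
  · by_cases h : d = c
    · right; left
      ext w
      simp [Language.mem_leftQuotient, h, mem_single]
    · right; right
      ext w
      simp [Language.mem_leftQuotient, h, mem_single]
  · right; right
    ext w
    simp [Language.mem_leftQuotient, mem_single]

lemma reg_word (w : List β) : ({w} : Language β).IsRegular := by
  induction w with
  | nil => exact reg_one
  | cons c w ih =>
    have := reg_mul (reg_cons c) ih
    convert this using 1
    ext x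
    rw [Language.mem_mul]
    simp [eq_comm, mem_single]

lemma reg_even : (lng fun w : List β => Even w.length).IsRegular := by
  refine ⟨Bool, inferInstance, ⟨fun b _ => !b, true, {true}⟩, ?_⟩
  have key : ∀ (w : List β) (b : Bool),
      DFA.evalFrom ⟨fun b _ => !b, true, {true}⟩ b w = (b == decide (Even w.length)) := by
    intro w
    induction w with
    | nil => simp
    | cons c w ih =>
      intro b
      rw [DFA.evalFrom_cons, ih]
      by_cases h : Even w.length <;> cases b <;> simp [h, Nat.even_add_one]
  ext w
  rw [DFA.mem_accepts, DFA.eval, key]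
  change _ ↔ Even w.length
  simp

/-- no trailing `false` -/
def Good : List Bool → Prop
  | [] => True
  | x :: l => Good l ∧ (l = [] → x = true)

/-- last letter automaton -/
lemma reg_good (d : Bool → β) (hd : d true ≠ d false) (y : Bool) :
    (lng fun w => ∃ v, Good (y :: v) ∧ w = v.map d).IsRegular := by
  classical
  let M : DFA β (Option Bool) := ⟨fun s c => match s with
    | none => none
    | some _ => if c = d true then some true else if c = d false then some false else none,
    some y, {some true}⟩
  have hdead : ∀ w, M.evalFrom none w = none := by
    intro w
    induction w with
    | nil => rfl
    | cons c w ih => exact ih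
  have key : ∀ (w : List β) (x : Bool), M.evalFrom (some x) w = some true ↔
      ∃ v, Good (x :: v) ∧ w = v.map d := by
    intro w
    induction w with
    | nil =>
      intro x
      simp [Good]
    | cons c w ih =>
      intro x
      rw [DFA.evalFrom_cons]
      have hs : M.step (some x) c = if c = d true then some true
        else if c = d false then some false else none := rfl
      rw [hs]
      split_ifs with h1 h2
      · rw [ih]
        constructor
        · rintro ⟨v, hv, rfl⟩
          exact ⟨true :: v, ⟨hv, by simp⟩, by simp [h1]⟩
        · rintro ⟨v, hv, h⟩
          cases v with
          | nil => simp at h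
          | cons b v =>
            simp only [List.map_cons, List.cons.injEq] at h
            cases b with
            | false => exact absurd (h1.symm.trans h.1) hd
            | true => exact ⟨v, hv.1, h.2⟩
      · rw [ih]
        constructor
        · rintro ⟨v, hv, rfl⟩
          exact ⟨false :: v, ⟨hv, by simp⟩, by simp [h2]⟩
        · rintro ⟨v, hv, h⟩
          cases v with
          | nil => simp at h
          | cons b v =>
            simp only [List.map_cons, List.cons.injEq] at h
            cases b with
            | true => exact absurd h.1 h1
            | false => exact ⟨v, hv.1, h.2⟩
      · rw [hdead]
        simp only [reduceCtorEq, false_iff]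
        rintro ⟨v, hv, h⟩
        cases v with
        | nil => simp at h
        | cons b v =>
          simp only [List.map_cons, List.cons.injEq] at h
          cases b
          · exact h2 h.1
          · exact h1 h.1
  refine ⟨Option Bool, inferInstance, M, ?_⟩
  ext w
  exact key w y

lemma reg_all (d : Bool → β) :
    (lng fun w => ∃ v : List Bool, w = v.map d).IsRegular := by
  classical
  let M : DFA β Bool := ⟨fun s c => s && (decide (c = d true) || decide (c = d false)),
    true, {true}⟩
  have hdead : ∀ w, M.evalFrom false w = false := by
    intro w
    induction w with
    | nil => rfl
    | cons c w ih => exact ih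
  refine ⟨Bool, inferInstance, M, ?_⟩
  ext w
  change M.evalFrom true w = true ↔ ∃ v : List Bool, w = v.map d
  induction w with
  | nil => simp
  | cons c w ih =>
    rw [DFA.evalFrom_cons]
    have hs : M.step true c = (decide (c = d true) || decide (c = d false)) := by
      simp [M]
    rw [hs]
    by_cases h1 : c = d true ∨ c = d false
    · have : (decide (c = d true) || decide (c = d false)) = true := by simpa using h1
      rw [this, ih]
      constructor
      · rintro ⟨v, rfl⟩
        rcases h1 with rfl | rfl
        · exact ⟨true :: v, rfl⟩
        · exact ⟨false :: v, rfl⟩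
      · rintro ⟨v, h⟩
        cases v with
        | nil => simp at h
        | cons b v =>
          simp only [List.map_cons, List.cons.injEq] at h
          exact ⟨v, h.2⟩
    · have : (decide (c = d true) || decide (c = d false)) = false := by simpa using h1
      rw [this, hdead]
      simp only [Bool.false_eq_true, false_iff]
      rintro ⟨v, h⟩
      cases v with
      | nil => simp at h
      | cons b v =>
        simp only [List.map_cons, List.cons.injEq] at h
        cases b
        · exact h1 (Or.inr h.1)
        · exact h1 (Or.inl h.1)

/-- admissible length predicates -/
def RegLen (r : ℕ → Prop) : Prop :=
  ∀ β : Type, (lng fun w : List β => r w.length).IsRegular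

lemma regLen_even : RegLen Even := fun _ => reg_even
lemma regLen_odd : RegLen (fun n => ¬ Even n) := fun _ => reg_even.compl
lemma regLen_true : RegLen (fun _ => True) := fun β => by
  convert (reg_zero (β := β)).compl using 1
  ext w
  change True ↔ ¬ False
  simp
lemma regLen_zero : RegLen (fun n => n = 0) := fun β => by
  convert reg_one (β := β) using 1
  ext w
  change w.length = 0 ↔ w = []
  simp

lemma reg_pref {r : ℕ → Prop} (hr : RegLen r) (d : Bool → β) :
    (lng fun w => ∃ u : List Bool, r u.length ∧ w = u.map d).IsRegular := by
  convert (hr β).inf (reg_all d) using 1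
  ext w
  rw [Language.mem_inf]
  change (∃ u : List Bool, r u.length ∧ w = u.map d) ↔ r w.length ∧ ∃ v : List Bool, w = v.map d
  constructor
  · rintro ⟨u, hu, rfl⟩
    exact ⟨by simpa using hu, u, rfl⟩
  · rintro ⟨h, u, rfl⟩
    exact ⟨u, by simpa using h, rfl⟩

/-- `u ++ mid` -/
def Piece₁ (r : ℕ → Prop) (d : Bool → β) (mid : List β) : Language β :=
  lng fun w => ∃ u : List Bool, r u.length ∧ w = u.map d ++ mid

/-- `u ++ mid ++ v` -/
def Piece₂ (r : ℕ → Prop) (d : Bool → β) (mid : List β) (y : Bool) : Language β :=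
  lng fun w => ∃ u v : List Bool, r u.length ∧ Good (y :: v) ∧ w = u.map d ++ (mid ++ v.map d)

lemma reg_piece₁ {r : ℕ → Prop} (hr : RegLen r) (d : Bool → β)
    (mid : List β) : (Piece₁ r d mid).IsRegular := by
  convert reg_mul (reg_pref hr d) (reg_word mid) using 1
  ext w
  rw [Language.mem_mul]
  constructor
  · rintro ⟨u, hu, rfl⟩
    exact ⟨_, ⟨u, hu, rfl⟩, mid, rfl, rfl⟩
  · rintro ⟨_, ⟨u, hu, rfl⟩, _, rfl, rfl⟩
    exact ⟨u, hu, rfl⟩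

lemma reg_piece₂ {r : ℕ → Prop} (hr : RegLen r) (d : Bool → β) (hd : d true ≠ d false)
    (mid : List β) (y : Bool) : (Piece₂ r d mid y).IsRegular := by
  convert reg_mul (reg_pref hr d) (reg_mul (reg_word mid) (reg_good d hd y)) using 1
  ext w
  rw [Language.mem_mul]
  constructor
  · rintro ⟨u, v, hu, hv, rfl⟩
    exact ⟨_, ⟨u, hu, rfl⟩, _, Language.mem_mul.2 ⟨mid, rfl, _, ⟨v, hv, rfl⟩, rfl⟩, rfl⟩
  · rintro ⟨_, ⟨u, hu, rfl⟩, _, h, rfl⟩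
    rw [Language.mem_mul] at h
    obtain ⟨_, rfl, _, ⟨v, hv, rfl⟩, rfl⟩ := h
    exact ⟨u, v, hu, hv, rfl⟩

lemma reg_iSup {ι : Type} (s : Finset ι) (F : ι → Language β) (h : ∀ i, (F i).IsRegular) :
    (lng fun w => ∃ i ∈ s, w ∈ F i).IsRegular := by
  classical
  induction s using Finset.induction_on with
  | empty =>
    convert reg_zero (β := β) using 1
    ext w
    change (∃ i ∈ (∅ : Finset ι), w ∈ F i) ↔ False
    simp
  | insert a s ha ih =>
    convert (h a).add ih using 1
    ext w
    rw [Language.mem_add]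
    change (∃ i ∈ insert a s, w ∈ F i) ↔ w ∈ F a ∨ ∃ i ∈ s, w ∈ F i
    simp

lemma reg_iSup' {ι : Type} [Fintype ι] (F : ι → Language β) (h : ∀ i, (F i).IsRegular) :
    (lng fun w => ∃ i, w ∈ F i).IsRegular := by
  simpa using reg_iSup Finset.univ F h

end Reg


/-! ### The encoding and the regularity of the relations -/

section Enc

variable {α : Type}

/-- The word which encodes a tape `u ++ v` with the cursor at position `|u|`. -/
def enc (b : Bool → α) (s : α) (u v : List Bool) : List α := u.map b ++ s :: v.map b

/-- The diagonal letters. -/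
def dg (b : Bool → α) (x : Bool) : Option α × Option α := (some (b x), some (b x))

lemma conv_diag (b : Bool → α) (v : List Bool) : conv (v.map b) (v.map b) = v.map (dg b) := by
  induction v with
  | nil => simp [conv]
  | cons x v ih => simp [conv, ih, dg]

lemma conv_pref (b : Bool → α) (u : List Bool) (p q : List α) :
    conv (u.map b ++ p) (u.map b ++ q) = u.map (dg b) ++ conv p q := by
  induction u with
  | nil => simp
  | cons x v ih => simp [conv, ih, dg]

lemma enc_append (b : Bool → α) (s : α) (u u' v : List Bool) :
    enc b s (u ++ u') v = u.map b ++ (u'.map b ++ s :: v.map b) := by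
  simp [enc]

/-- Normalized `cons`. -/
def ncons : Bool → List Bool → List Bool
  | false, [] => []
  | x, l => x :: l

lemma ncons_good {x : Bool} {l : List Bool} (h : Good (x :: l)) : ncons x l = x :: l := by
  cases x <;> cases l <;> simp_all [ncons, Good]

lemma good_ncons {x : Bool} {l : List Bool} (h : Good l) : Good (ncons x l) := by
  cases x <;> cases l <;> simp_all [ncons, Good]

lemma good_or {l : List Bool} (x : Bool) (h : Good l) : Good (x :: l) ∨ (l = [] ∧ x = false) := by
  cases x <;> cases l <;> simp_all [Good]

lemma Good.tail {x : Bool} {l : List Bool} (h : Good (x :: l)) : Good l := h.1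

/-- Flip the lamp at the cursor. -/
def flipH : List Bool → List Bool
  | [] => [true]
  | x :: l => ncons (!x) l

lemma good_flipH {l : List Bool} (h : Good l) : Good (flipH l) := by
  cases l with
  | nil => simp [flipH, Good]
  | cons x l => exact good_ncons h.1

/-- Moving the cursor one step to the right. -/
inductive StepT : List Bool → List Bool → List Bool → List Bool → Prop
  | even (u v : List Bool) : Even u.length →
      StepT u v (u ++ [v.getD 0 false, v.getD 1 false]) (v.drop 2)
  | one (x : Bool) (v : List Bool) : StepT [x] v [] (ncons x v)
  | odd (u : List Bool) (x y : Bool) (v : List Bool) : ¬ Even u.length →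
      StepT (u ++ [x, y]) v u (ncons x (ncons y v))

lemma stepT_total (u v : List Bool) : ∃ u' v', StepT u v u' v' := by
  by_cases h : Even u.length
  · exact ⟨_, _, .even u v h⟩
  · rcases List.eq_nil_or_concat u with rfl | ⟨u, y, rfl⟩
    · simp at h
    rcases List.eq_nil_or_concat u with rfl | ⟨u, x, rfl⟩
    · exact ⟨_, _, .one y v⟩
    · refine ⟨u, ncons x (ncons y v), ?_⟩
      have : ¬ Even u.length := by
        simpa [Nat.even_add_one] using h
      simpa using StepT.odd u x y v this

lemma good_stepT {u v u' v' : List Bool} (h : StepT u v u' v') (hv : Good v) : Good v' := by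
  cases h with
  | even _ _ h =>
    rcases v with _ | ⟨x, _ | ⟨y, v⟩⟩
    · simp [Good]
    · simp [Good]
    · exact hv.1.1
  | one x _ => exact good_ncons hv
  | odd _ x y _ h => exact good_ncons (good_ncons hv)




lemma dg_ne (b : Bool → α) (hb : b true ≠ b false) : dg b true ≠ dg b false := by
  simpa [dg] using hb

lemma reg_enc (b : Bool → α) (s : α) (hb : b true ≠ b false) :
    (lng fun w => ∃ u v, Good v ∧ w = enc b s u v).IsRegular := by
  convert reg_piece₂ regLen_true b hb [s] true using 1
  ext w
  constructor
  · rintro ⟨u, v, hv, rfl⟩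
    exact ⟨u, v, trivial, ⟨hv, by simp⟩, by simp [enc]⟩
  · rintro ⟨u, v, -, hv, rfl⟩
    exact ⟨u, v, hv.1, by simp [enc]⟩

lemma reg_flip (b : Bool → α) (s : α) (hb : b true ≠ b false) :
    (lng fun w => ∃ u v, Good v ∧
    w = conv (enc b s u v) (enc b s u (flipH v))).IsRegular := by
  have hd := dg_ne b hb
  convert ((reg_piece₁ regLen_true (dg b) (conv [s] [s, b true])).add
    (reg_piece₁ regLen_true (dg b) (conv [s, b true] [s]))).add
    (reg_iSup' _ (fun x : Bool =>
      reg_piece₂ regLen_true (dg b) hd (conv [s, b x] [s, b (!x)]) false)) using 1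
  ext w
  rw [Language.mem_add, Language.mem_add]
  constructor
  · rintro ⟨u, v, hv, rfl⟩
    rw [enc, enc, conv_pref]
    cases v with
    | nil => exact Or.inl (Or.inl ⟨u, trivial, rfl⟩)
    | cons x v =>
      cases v with
      | nil =>
        obtain rfl : x = true := hv.2 rfl
        exact Or.inl (Or.inr ⟨u, trivial, rfl⟩)
      | cons y v =>
        refine Or.inr ⟨x, u, y :: v, trivial, ⟨hv.1, by simp⟩, ?_⟩
        simp [conv, conv_diag, dg, flipH, ncons_good (x := !x) (l := y :: v) ⟨hv.1, by simp⟩]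
  · rintro ((⟨u, -, rfl⟩ | ⟨u, -, rfl⟩) | ⟨x, u, v, -, hv, rfl⟩)
    · refine ⟨u, [], trivial, ?_⟩
      rw [enc, enc, conv_pref]
      rfl
    · refine ⟨u, [true], by simp [Good], ?_⟩
      rw [enc, enc, conv_pref]
      rfl
    · have hne : v ≠ [] := fun h => by simpa using hv.2 h
      refine ⟨u, x :: v, ⟨hv.1, fun h => absurd h hne⟩, ?_⟩
      rw [enc, enc, conv_pref]
      simp [conv, conv_diag, flipH, ncons_good (x := !x) (l := v) ⟨hv.1, fun h => absurd h hne⟩]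

lemma reg_step (b : Bool → α) (s : α) (hb : b true ≠ b false) :
    (lng fun w => ∃ u v u' v', Good v ∧ StepT u v u' v' ∧
    w = conv (enc b s u v) (enc b s u' v')).IsRegular := by
  have hd := dg_ne b hb
  convert (((((((reg_piece₁ regLen_even (dg b) (conv [s] [b false, b false, s])).add
    (reg_piece₁ regLen_even (dg b) (conv [s, b true] [b true, b false, s]))).add
    (reg_iSup' _ (fun x : Bool × Bool =>
      reg_piece₂ regLen_even (dg b) hd (conv [s, b x.1, b x.2] [b x.1, b x.2, s]) x.2))).add
    (reg_iSup' _ (fun x : Bool =>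
      reg_piece₂ regLen_zero (dg b) hd (conv [b x, s] [s, b x]) x))).add
    (reg_piece₁ regLen_zero (dg b) (conv [b false, s] [s]))).add
    (reg_iSup' _ (fun x : Bool × Bool =>
      reg_piece₂ regLen_odd (dg b) hd (conv [b x.1, b x.2, s] [s, b x.1, b x.2]) x.2))).add
    (reg_piece₁ regLen_odd (dg b) (conv [b false, b false, s] [s]))).add
    (reg_piece₁ regLen_odd (dg b) (conv [b true, b false, s] [s, b true])) using 1
  ext w
  simp only [Language.mem_add]
  constructor
  · rintro ⟨u, v, u', v', hv, hs, rfl⟩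
    cases hs with
    | even _ _ h =>
      rw [enc_append, enc, conv_pref]
      rcases v with _ | ⟨x, _ | ⟨y, v⟩⟩
      · iterate 7 left
        exact ⟨u, h, rfl⟩
      · obtain rfl : x = true := hv.2 rfl
        iterate 6 left
        right
        exact ⟨u, h, rfl⟩
      · iterate 5 left
        right
        refine ⟨(x, y), u, v, h, hv.1, ?_⟩
        simp [conv, conv_diag]
    | one x _ =>
      rcases good_or x hv with h | ⟨rfl, rfl⟩
      · iterate 4 left
        right
        refine ⟨x, [], v, rfl, h, ?_⟩
        rw [ncons_good h]
        simp [conv, conv_diag, enc]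
      · iterate 3 left
        right
        exact ⟨[], rfl, rfl⟩
    | odd _ x y _ h =>
      rw [enc_append, enc, conv_pref]
      rcases good_or y hv with h' | ⟨rfl, rfl⟩
      · iterate 2 left
        right
        refine ⟨(x, y), u', v, h, h', ?_⟩
        rw [ncons_good h', ncons_good ⟨h', by simp⟩]
        simp [conv, conv_diag]
      · cases x
        · left; right
          exact ⟨u', h, rfl⟩
        · right
          exact ⟨u', h, rfl⟩
  · rintro (((((((⟨u, h, rfl⟩ | ⟨u, h, rfl⟩) | ⟨⟨x, y⟩, u, v, h, hv, rfl⟩) |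
      ⟨x, u, v, h, hv, rfl⟩) | ⟨u, h, rfl⟩) | ⟨⟨x, y⟩, u, v, h, hv, rfl⟩) | ⟨u, h, rfl⟩) |
      ⟨u, h, rfl⟩)
    · refine ⟨u, [], _, _, trivial, .even _ _ h, ?_⟩
      rw [enc_append, enc, conv_pref]
      rfl
    · refine ⟨u, [true], _, _, by simp [Good], .even _ _ h, ?_⟩
      rw [enc_append, enc, conv_pref]
      rfl
    · refine ⟨u, x :: y :: v, _, _, ⟨hv, by simp⟩, .even _ _ h, ?_⟩
      rw [enc_append, enc, conv_pref]
      simp [conv, conv_diag]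
    · obtain rfl : u = [] := List.length_eq_zero_iff.1 h
      refine ⟨[x], v, _, _, hv.1, .one _ _, ?_⟩
      rw [ncons_good hv]
      simp [conv, conv_diag, enc]
    · obtain rfl : u = [] := List.length_eq_zero_iff.1 h
      exact ⟨[false], [], _, _, trivial, .one _ _, rfl⟩
    · refine ⟨u ++ [x, y], v, _, _, hv.1, .odd _ _ _ _ h, ?_⟩
      rw [enc_append, enc, conv_pref, ncons_good hv, ncons_good ⟨hv, by simp⟩]
      simp [conv, conv_diag]
    · refine ⟨u ++ [false, false], [], _, _, trivial, .odd _ _ _ _ h, ?_⟩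
      rw [enc_append, enc, conv_pref]
      rfl
    · refine ⟨u ++ [true, false], [], _, _, trivial, .odd _ _ _ _ h, ?_⟩
      rw [enc_append, enc, conv_pref]
      rfl

end Enc
/-! ### The group elements represented by tapes -/

section Val

/-- The cell of the tape which holds the lamp at `z`. -/
def cell (z : ℤ) : ℕ := if 0 ≤ z then (2 * z).toNat else (-2 * z - 1).toNat

/-- The lamp held by a cell. -/
def pos (k : ℕ) : ℤ := if k % 2 = 0 then (k / 2 : ℕ) else -((k / 2 : ℕ) : ℤ) - 1

lemma cell_pos (k : ℕ) : cell (pos k) = k := by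
  unfold cell pos
  split_ifs <;> omega

lemma pos_cell (z : ℤ) : pos (cell z) = z := by
  unfold cell pos
  split_ifs <;> omega

lemma cell_inj : Function.Injective cell := Function.LeftInverse.injective pos_cell

lemma cell_bound {z : ℤ} {n : ℕ} (h : cell z < n) : -(n : ℤ) ≤ z ∧ z < n := by
  unfold cell at h
  split_ifs at h <;> omega

/-- Content of a cell. -/
def gd (l : List Bool) (n : ℕ) : Bool := l.getD n false

@[simp] lemma gd_nil (n : ℕ) : gd [] n = false := by simp [gd]
@[simp] lemma gd_cons_zero (x : Bool) (l : List Bool) : gd (x :: l) 0 = x := by simp [gd]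
@[simp] lemma gd_cons_succ (x : Bool) (l : List Bool) (n : ℕ) : gd (x :: l) (n + 1) = gd l n := by
  simp [gd]

lemma gd_of_le {l : List Bool} {n : ℕ} (h : l.length ≤ n) : gd l n = false := by
  simp [gd, List.getD_eq_getElem?_getD, h]

lemma gd_append (u v : List Bool) (n : ℕ) :
    gd (u ++ v) n = if n < u.length then gd u n else gd v (n - u.length) := by
  induction u generalizing n with
  | nil => simp
  | cons x u ih =>
    cases n with
    | zero => simp
    | succ n => simp [ih]

lemma gd_append_congr (u : List Bool) {v v' : List Bool} (h : ∀ n, gd v n = gd v' n) (n : ℕ) :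
    gd (u ++ v) n = gd (u ++ v') n := by
  simp [gd_append, h]

lemma gd_cons_congr (x : Bool) {v v' : List Bool} (h : ∀ n, gd v n = gd v' n) (n : ℕ) :
    gd (x :: v) n = gd (x :: v') n := gd_append_congr [x] h n

lemma gd_ncons (x : Bool) (l : List Bool) (n : ℕ) : gd (ncons x l) n = gd (x :: l) n := by
  cases x <;> cases l <;> cases n <;> simp [ncons]

lemma good_eq_nil {l : List Bool} (hl : Good l) (h : ∀ n, gd l n = false) : l = [] := by
  induction l with
  | nil => rfl
  | cons x l ih =>
    have hl' : l = [] := ih hl.1 fun n => by simpa using h (n + 1)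
    have hx := hl.2 hl'
    have := h 0
    simp [hx] at this

lemma good_ext {l l' : List Bool} (hl : Good l) (hl' : Good l') (h : ∀ n, gd l n = gd l' n) :
    l = l' := by
  induction l generalizing l' with
  | nil => exact (good_eq_nil hl' fun n => by simpa using (h n).symm).symm
  | cons x l ih =>
    cases l' with
    | nil => exact good_eq_nil hl fun n => by simpa using h n
    | cons y l' =>
      have h0 : x = y := by simpa using h 0
      rw [h0, ih hl.1 hl'.1 fun n => by simpa using h (n + 1)]

lemma good_exists (N : ℕ) (g : ℕ → Bool) (hg : ∀ n, N ≤ n → g n = false) :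
    ∃ l, Good l ∧ ∀ n, gd l n = g n := by
  induction N generalizing g with
  | zero => exact ⟨[], trivial, fun n => by simp [hg]⟩
  | succ N ih =>
    obtain ⟨l, hl, h⟩ := ih (fun n => g (n + 1)) fun n hn => hg _ (by omega)
    refine ⟨ncons (g 0) l, good_ncons hl, fun n => ?_⟩
    rw [gd_ncons]
    cases n with
    | zero => simp
    | succ n => simp [h]

lemma pref_exists (k : ℕ) (g : ℕ → Bool) :
    ∃ l : List Bool, l.length = k ∧ ∀ n, n < k → gd l n = g n := by
  refine ⟨(List.range k).map g, by simp, fun n hn => ?_⟩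
  simp [gd, List.getD_eq_getElem?_getD, hn]

/-- The lamps of a tape. -/
noncomputable def lampsOf (l : List Bool) : Lamps :=
  Finsupp.ofSupportFinite (fun z => if gd l (cell z) = true then 1 else 0) <| by
    refine ((Set.finite_Iio l.length).preimage cell_inj.injOn).subset fun z hz => ?_
    by_contra hcon
    have h1 : l.length ≤ cell z := by simpa using hcon
    simp [gd_of_le h1] at hz

lemma lampsOf_apply (l : List Bool) (z : ℤ) :
    lampsOf l z = if gd l (cell z) = true then 1 else 0 := rfl

lemma lampsOf_congr {l l' : List Bool} (h : ∀ n, gd l n = gd l' n) : lampsOf l = lampsOf l' := by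
  ext z
  simp [lampsOf_apply, h]

lemma lampsOf_inj {l l' : List Bool} (h : lampsOf l = lampsOf l') (n : ℕ) : gd l n = gd l' n := by
  have := DFunLike.congr_fun h (pos n)
  rw [lampsOf_apply, lampsOf_apply, cell_pos] at this
  cases h1 : gd l n <;> cases h2 : gd l' n <;> simp [h1, h2] at this ⊢

/-- The group element of a tape. -/
noncomputable def val (u v : List Bool) : Lamplighter := (lampsOf (u ++ v), pos u.length)

lemma val_inj {u v u' v' : List Bool} (hv : Good v) (hv' : Good v') (h : val u v = val u' v') :
    u = u' ∧ v = v' := by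
  have h1 : lampsOf (u ++ v) = lampsOf (u' ++ v') := congrArg Prod.fst h
  have h2 : pos u.length = pos u'.length := congrArg Prod.snd h
  have h3 : u.length = u'.length := by rw [← cell_pos u.length, h2, cell_pos]
  have h4 := lampsOf_inj h1
  constructor
  · apply List.ext_getElem h3
    intro n hn hn'
    have := h4 n
    rw [gd_append, gd_append, if_pos hn, if_pos hn'] at this
    simpa [gd, List.getD_eq_getElem?_getD, hn, hn'] using this
  · apply good_ext hv hv'
    intro n
    have := h4 (u.length + n)
    rw [gd_append, gd_append, ← h3] at this
    simpa using this

lemma val_surj (g : Lamplighter) : ∃ u v, Good v ∧ val u v = g := by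
  obtain ⟨f, m⟩ := g
  have key : ∃ N : ℕ, ∀ n, N ≤ n → f (pos n) = 0 := by
    obtain ⟨N, hN⟩ := (f.support.image cell).exists_nat_subset_range
    refine ⟨N, fun n hn => ?_⟩
    by_contra hne
    have : n ∈ Finset.range N := hN (Finset.mem_image.2 ⟨pos n, by simpa using hne, cell_pos n⟩)
    simp at this
    omega
  obtain ⟨N, hN⟩ := key
  obtain ⟨u, hu, hug⟩ := pref_exists (cell m) (fun n => decide (f (pos n) = 1))
  obtain ⟨v, hv, hvg⟩ := good_exists N (fun n => decide (f (pos (cell m + n)) = 1))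
    (fun n hn => by simp [hN (cell m + n) (by omega)])
  refine ⟨u, v, hv, Prod.ext ?_ ?_⟩
  · change lampsOf (u ++ v) = f
    ext z
    have h : gd (u ++ v) (cell z) = decide (f z = 1) := by
      rw [gd_append, hu]
      split_ifs with h
      · rw [hug _ h, pos_cell]
      · rw [hvg, Nat.add_sub_cancel' (by omega), pos_cell]
    rw [lampsOf_apply, h]
    generalize f z = x
    revert x
    decide
  · change pos u.length = m
    rw [hu, pos_cell]

lemma lampShift_apply (m : ℤ) (f : Lamps) (i : ℤ) : lampShift m f i = f (i - m) := by
  have := Finsupp.mapDomain_apply (add_left_injective m) f (i - m)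
  simpa [lampShift] using this

lemma val_flip (u v : List Bool) : val u (flipH v) = val u v * Lamplighter.a := by
  rw [Lamplighter.mul_def]
  refine Prod.ext ?_ (add_zero _).symm
  change lampsOf (u ++ flipH v) = lampsOf (u ++ v) + lampShift (pos u.length) (Finsupp.single 0 1)
  ext z
  have hflip : ∀ n, gd (flipH v) n = if n = 0 then !(gd v n) else gd v n := by
    intro n
    cases v with
    | nil => cases n <;> simp [flipH]
    | cons x v => cases n <;> simp [flipH, gd_ncons]
  rw [Finsupp.add_apply, lampShift_apply, lampsOf_apply, lampsOf_apply, gd_append, gd_append,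
    hflip, Finsupp.single_apply]
  by_cases hz : z = pos u.length
  · subst hz
    simp only [cell_pos, lt_irrefl, if_false, Nat.sub_self, sub_self, if_true]
    cases gd v 0 <;> decide
  · have h1 : ¬ (0 = z - pos u.length) := by omega
    have h2 : cell z ≠ u.length := fun h => hz (by rw [← h, pos_cell])
    rw [if_neg h1, add_zero]
    by_cases h3 : cell z < u.length
    · simp [h3]
    · have : ¬ (cell z - u.length = 0) := by omega
      simp [h3, this]

lemma val_step {u v u' v' : List Bool} (h : StepT u v u' v') :
    val u' v' = val u v * Lamplighter.t := by
  rw [Lamplighter.mul_def]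
  have h0 : ∀ m, lampShift m (0 : Lamps) = 0 := fun m => Finsupp.mapDomain_zero
  have hgd : ∀ n, gd (u' ++ v') n = gd (u ++ v) n := by
    cases h with
    | even _ _ h =>
      intro n
      rw [List.append_assoc]
      apply gd_append_congr
      intro n
      rcases v with _ | ⟨x, _ | ⟨y, v⟩⟩
      · rcases n with _ | _ | n <;> simp
      · rcases n with _ | _ | n <;> simp
      · simp
    | one x _ =>
      intro n
      simpa using gd_ncons x v n
    | odd _ x y _ h =>
      intro n
      rw [List.append_assoc]
      apply gd_append_congr
      intro n
      rw [gd_ncons]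
      exact gd_cons_congr _ (gd_ncons y v) n
  have hpos : pos u'.length = pos u.length + 1 := by
    cases h with
    | even _ _ h =>
      rw [Nat.even_iff] at h
      simp only [pos, List.length_append, List.length_cons, List.length_nil]
      split_ifs <;> omega
    | one x _ => simp [pos]
    | odd _ x y _ h =>
      rw [Nat.even_iff] at h
      simp only [pos, List.length_append, List.length_cons, List.length_nil]
      split_ifs <;> omega
  refine Prod.ext ?_ hpos
  change lampsOf (u' ++ v') = lampsOf (u ++ v) + lampShift (pos u.length) (0 : Lamps)
  rw [h0, add_zero, lampsOf_congr hgd]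

end Val

/-! ### Word length -/

section Len

/-- The generating set. -/
abbrev gens : Set Lamplighter := {Lamplighter.a, Lamplighter.t}

/-- `g` is the value of a word of length at most `n`. -/
def Short (g : Lamplighter) (n : ℕ) : Prop :=
  ∃ w : List (Alph gens), eval gens w = g ∧ w.length ≤ n

lemma ev_nil : eval gens [] = 1 := rfl

lemma ev_cons (c : Alph gens) (w : List (Alph gens)) :
    eval gens (c :: w) = c.1 * eval gens w := List.prod_cons

lemma ev_append (w w' : List (Alph gens)) :
    eval gens (w ++ w') = eval gens w * eval gens w' := by
  induction w with
  | nil => rw [List.nil_append, ev_nil, one_mul]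
  | cons c w ih => rw [List.cons_append, ev_cons, ev_cons, ih, mul_assoc]

lemma Short.wordLength {g : Lamplighter} {n : ℕ} (h : Short g n) : wordLength gens g ≤ n := by
  obtain ⟨w, hw, hn⟩ := h
  have h1 : w.length ∈ {n | ∃ w : List (Alph gens), eval gens w = g ∧ w.length = n} :=
    ⟨w, hw, rfl⟩
  exact (Nat.sInf_le h1).trans hn

lemma Short.mono {g : Lamplighter} {n m : ℕ} (h : Short g n) (hnm : n ≤ m) : Short g m := by
  obtain ⟨w, hw, hn⟩ := h
  exact ⟨w, hw, hn.trans hnm⟩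

lemma Short.one : Short 1 0 := ⟨[], ev_nil, le_refl _⟩

lemma Short.mul {g h : Lamplighter} {n m : ℕ} (hg : Short g n) (hh : Short h m) :
    Short (g * h) (n + m) := by
  obtain ⟨w, rfl, hn⟩ := hg
  obtain ⟨w', rfl, hm⟩ := hh
  exact ⟨w ++ w', ev_append w w', by rw [List.length_append]; omega⟩

lemma Short.gen {g : Lamplighter} (h : g ∈ gens ∪ gens⁻¹) : Short g 1 := by
  refine ⟨[(⟨g, h⟩ : Alph gens)], ?_, le_refl _⟩
  exact (ev_cons (show Alph gens from ⟨g, h⟩) []).trans (mul_one g)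

lemma Short.inv_eval (w : List (Alph gens)) : Short (eval gens w)⁻¹ w.length := by
  induction w with
  | nil => rw [ev_nil, inv_one]; exact Short.one
  | cons c w ih =>
    have hc : (c.1)⁻¹ ∈ gens ∪ gens⁻¹ := by
      rcases c.2 with h | h
      · exact Or.inr (Set.mem_inv.2 (by rwa [inv_inv]))
      · exact Or.inl (Set.mem_inv.1 h)
    rw [ev_cons, mul_inv_rev]
    exact ih.mul (Short.gen hc)

lemma Short.pow {g : Lamplighter} (hg : Short g 1) (n : ℕ) : Short (g ^ n) n := by
  induction n with
  | zero => rw [pow_zero]; exact Short.one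
  | succ n ih => rw [pow_succ]; exact ih.mul hg

lemma short_a : Short Lamplighter.a 1 := Short.gen (Or.inl (Or.inl rfl))
lemma short_t : Short Lamplighter.t 1 := Short.gen (Or.inl (Or.inr rfl))
lemma t_inv_mem : Lamplighter.t⁻¹ ∈ gens⁻¹ :=
  Set.mem_inv.2 (by rw [inv_inv]; exact Or.inr rfl)
lemma short_t_inv : Short Lamplighter.t⁻¹ 1 := Short.gen (Or.inr t_inv_mem)

/-- The element with the given lamps and the given position. -/
def mkL (f : Lamps) (m : ℤ) : Lamplighter := (f, m)

lemma mkL_mul (f g : Lamps) (m k : ℤ) :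
    mkL f m * mkL g k = mkL (f + lampShift m g) (m + k) := rfl

lemma a_eq : Lamplighter.a = mkL (Finsupp.single 0 1) 0 := rfl
lemma t_eq : Lamplighter.t = mkL 0 1 := rfl

lemma shift_zero' (m : ℤ) : lampShift m (0 : Lamps) = 0 := Finsupp.mapDomain_zero

lemma t_inv : Lamplighter.t⁻¹ = mkL 0 (-1) := by
  rw [Lamplighter.inv_def]
  exact congrArg (fun f => mkL f (-1)) (shift_zero' (-1))

lemma mul_t (f : Lamps) (m k : ℤ) : mkL f m * mkL 0 k = mkL f (m + k) := by
  rw [mkL_mul, shift_zero', add_zero]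

lemma t_inv_pow (n : ℕ) : Lamplighter.t⁻¹ ^ n = mkL 0 (-(n : ℤ)) := by
  induction n with
  | zero => rfl
  | succ n ih =>
    rw [pow_succ, ih, t_inv, mul_t]
    congr 1
    push_cast
    ring

lemma short_walk (N : ℕ) (f : Lamps) (hf : ∀ z, f z ≠ 0 → 0 ≤ z ∧ z < N) :
    Short (mkL f (N : ℤ)) (2 * N) := by
  induction N generalizing f with
  | zero =>
    have : f = 0 := by
      ext z
      by_contra h
      have := hf z h
      omega
    subst this
    exact Short.one
  | succ N ih =>
    have h1 := ih (f.erase (N : ℤ)) (fun z hz => by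
      by_cases hzN : z = N
      · subst hzN; simp at hz
      · rw [Finsupp.erase_ne hzN] at hz
        have := hf z hz
        push_cast at this
        omega)
    by_cases h0 : f N = 0
    · have : f.erase (N : ℤ) = f := by
        rw [Finsupp.erase_of_notMem_support]
        simpa using h0
      rw [this] at h1
      have h2 := h1.mul short_t
      rw [t_eq, mul_t] at h2
      push_cast
      exact h2.mono (by omega)
    · have hone : f N = 1 := by
        revert h0
        generalize f N = x
        revert x
        decide
      have h2 := (h1.mul short_a).mul short_t
      have e : f.erase (N : ℤ) + lampShift N (Finsupp.single 0 1) = f := by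
        rw [lampShift, Finsupp.mapDomain_single, zero_add, ← hone]
        exact Finsupp.erase_add_single _ _
      rw [t_eq, a_eq, mkL_mul, e, mul_t, add_zero] at h2
      push_cast
      exact h2.mono (by omega)

lemma short_general (N : ℕ) (f : Lamps) (m : ℤ) (hf : ∀ z, f z ≠ 0 → -(N : ℤ) ≤ z ∧ z < N)
    (hm : -(N : ℤ) ≤ m ∧ m < N) : Short (mkL f m) (7 * N) := by
  have h1 := Short.pow short_t_inv N
  have h2 := short_walk (2 * N) (lampShift N f) (fun z hz => by
    rw [lampShift_apply] at hz
    have := hf _ hz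
    push_cast
    omega)
  have h3 := Short.pow short_t_inv (N - m).toNat
  have h4 := (h1.mul h2).mul h3
  have e : -(N : ℤ) + ((2 * N : ℕ) : ℤ) + -((N - m).toNat : ℤ) = m := by
    push_cast
    omega
  rw [t_inv_pow, t_inv_pow, mkL_mul, mul_t, e, lampShift_lampShift, add_neg_cancel,
    lampShift_zero, zero_add] at h4
  exact h4.mono (by omega)

lemma short_val (u v : List Bool) : Short (val u v) (7 * (u.length + v.length + 1)) := by
  change Short (mkL (lampsOf (u ++ v)) (pos u.length)) _
  apply short_general
  · intro z hz
    have h : cell z < u.length + v.length + 1 := by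
      by_contra hcon
      apply hz
      rw [lampsOf_apply, gd_of_le (by simp; omega)]
      simp
    exact cell_bound h
  · exact cell_bound (by rw [cell_pos]; omega)

end Len

/-! ### The representation -/

section Final

/-- The letters for cells. -/
noncomputable def bl : Bool → Alph gens
  | true => ⟨Lamplighter.a, Or.inl (Or.inl rfl)⟩
  | false => ⟨Lamplighter.t, Or.inl (Or.inr rfl)⟩

/-- The letter for the cursor. -/
noncomputable def sl : Alph gens := ⟨Lamplighter.t⁻¹, Or.inr t_inv_mem⟩

lemma bl_ne : bl true ≠ bl false := by
  intro h
  have h1 : Lamplighter.a = Lamplighter.t := congrArg Subtype.val h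
  have h2 : (0 : ℤ) = 1 := congrArg Prod.snd h1
  omega

lemma sl_ne (x : Bool) : bl x ≠ sl := by
  intro h
  have h1 := congrArg Subtype.val h
  cases x with
  | true =>
    have h2 : (0 : ℤ) = -1 := congrArg Prod.snd h1
    omega
  | false =>
    have h2 : (1 : ℤ) = -1 := congrArg Prod.snd h1
    omega

lemma bl_inj : Function.Injective bl := by
  intro x y h
  cases x <;> cases y <;> first | rfl | exact absurd h bl_ne | exact absurd h.symm bl_ne

lemma enc_inj {u v u' v' : List Bool} (h : enc bl sl u v = enc bl sl u' v') :
    u = u' ∧ v = v' := by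
  induction u generalizing u' with
  | nil =>
    cases u' with
    | nil =>
      simp only [enc, List.map_nil, List.nil_append, List.cons.injEq, true_and] at h
      exact ⟨rfl, List.map_injective_iff.2 bl_inj h⟩
    | cons x u' =>
      simp only [enc, List.map_nil, List.nil_append, List.map_cons, List.cons_append,
        List.cons.injEq] at h
      exact absurd h.1.symm (sl_ne x)
  | cons x u ih =>
    cases u' with
    | nil =>
      simp only [enc, List.map_nil, List.nil_append, List.map_cons, List.cons_append,
        List.cons.injEq] at h
      exact absurd h.1 (sl_ne x)
    | cons y u' =>
      simp only [enc, List.map_cons, List.cons_append, List.cons.injEq] at h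
      obtain ⟨h1, h2⟩ := ih h.2
      exact ⟨by rw [bl_inj h.1, h1], h2⟩

/-- The representation. -/
noncomputable def psi : List (Alph gens) → Lamplighter :=
  Function.extend (fun p : List Bool × List Bool => enc bl sl p.1 p.2) (fun p => val p.1 p.2) 1

lemma psi_enc (u v : List Bool) : psi (enc bl sl u v) = val u v := by
  have hinj : Function.Injective (fun p : List Bool × List Bool => enc bl sl p.1 p.2) :=
    fun p q h => Prod.ext (enc_inj h).1 (enc_inj h).2
  exact hinj.extend_apply _ _ (u, v)

/-- The language of all the codes. -/
noncomputable def codes : Language (Alph gens) := lng fun w => ∃ u v, Good v ∧ w = enc bl sl u v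

lemma reg_congr {β : Type*} {L M : Language β} (h : M.IsRegular)
    (hLM : ∀ w, w ∈ L ↔ w ∈ M) : L.IsRegular := by
  have e : L = M := Set.ext hLM
  rwa [e]

lemma rep : IsCayleyAutomaticRep gens codes psi := by
  refine ⟨reg_enc bl sl bl_ne, ⟨fun _ _ => trivial, ?_, ?_⟩, ?_⟩
  · rintro _ ⟨u, v, hv, rfl⟩ _ ⟨u', v', hv', rfl⟩ h
    rw [psi_enc, psi_enc] at h
    obtain ⟨rfl, rfl⟩ := val_inj hv hv' h
    rfl
  · intro g _
    obtain ⟨u, v, hv, rfl⟩ := val_surj g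
    exact ⟨_, ⟨u, v, hv, rfl⟩, psi_enc u v⟩
  · rintro _ (rfl | rfl)
    · unfold IsRegularRel
      refine reg_congr (reg_flip bl sl bl_ne) fun w => ?_
      constructor
      · rintro ⟨⟨_, _⟩, ⟨⟨u, v, hv, rfl⟩, ⟨u', v', hv', rfl⟩, h⟩, rfl⟩
        simp only [psi_enc, ← val_flip] at h
        obtain ⟨rfl, rfl⟩ := val_inj hv' (good_flipH hv) h
        exact ⟨_, _, hv, rfl⟩
      · rintro ⟨u, v, hv, rfl⟩
        exact ⟨(_, _), ⟨⟨u, v, hv, rfl⟩, ⟨u, flipH v, good_flipH hv, rfl⟩, by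
          change psi (enc bl sl u (flipH v)) = psi (enc bl sl u v) * _
          rw [psi_enc, psi_enc, val_flip]⟩, rfl⟩
    · unfold IsRegularRel
      refine reg_congr (reg_step bl sl bl_ne) fun w => ?_
      constructor
      · rintro ⟨⟨_, _⟩, ⟨⟨u, v, hv, rfl⟩, ⟨u', v', hv', rfl⟩, h⟩, rfl⟩
        obtain ⟨u₁, v₁, hs⟩ := stepT_total u v
        simp only [psi_enc, ← val_step hs] at h
        obtain ⟨rfl, rfl⟩ := val_inj hv' (good_stepT hs hv) h
        exact ⟨_, _, _, _, hv, hs, rfl⟩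
      · rintro ⟨u, v, u', v', hv, hs, rfl⟩
        exact ⟨(_, _), ⟨⟨u, v, hv, rfl⟩, ⟨u', v', good_stepT hs hv, rfl⟩, by
          change psi (enc bl sl u' v') = psi (enc bl sl u v) * _
          rw [psi_enc, psi_enc, val_step hs]⟩, rfl⟩

lemma bound (w : List (Alph gens)) (hw : w ∈ codes) :
    cayleyDist gens (eval gens w) (psi w) ≤ 8 * w.length := by
  apply Short.wordLength
  obtain ⟨u, v, hv, rfl⟩ := hw
  refine ((Short.inv_eval _).mul (psi_enc u v ▸ short_val u v)).mono ?_
  simp [enc]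
  omega

end Final

end LampProof

open CAG in
/-- The lamplighter group `ℤ₂ ≀ ℤ` belongs to the class `ℬ_𝔦`, where `𝔦(n) = n` is the
identity function. -/
theorem lamplighter_mem_classB_ident :
    InB ({Lamplighter.a, Lamplighter.t} : Set Lamplighter) identF := by
  refine ⟨LampProof.codes, LampProof.psi, LampProof.rep, 8, 1, 1, by norm_num, by norm_num,
    by norm_num, le_refl _, fun n _ w hw hn => ?_⟩
  have h : cayleyDist LampProof.gens (eval LampProof.gens w) (LampProof.psi w) ≤ 8 * n :=
    (LampProof.bound w hw).trans (by omega)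
  have h' : ((cayleyDist LampProof.gens (eval LampProof.gens w) (LampProof.psi w) : ℕ) : ℝ) ≤
    ((8 * n : ℕ) : ℝ) := Nat.cast_le.2 h
  simpa [identF] using h'
end
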